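/- arXiv:1208.3506 — 4 statements merged into one kernel-verified Lean document; each statement's English description precedes it below -/
import Mathlib

section
/- Let s and τ be positive integers and let φ : R → k^τ be a k-linear map such that φ(𝓜^s) = k^τ and φ(𝓜^{s+1}) = 0, where 𝓜 = (x₁,…,x_m) is the maximal ideal of R. Set I = {h ∈ R : φ(Rh) = 0}. Then R/I is an Artinian s-level local k-algebra of type τ. -/
/-- The maximal ideal `𝓜 = (x₁,…,x_m)` of the formal power series ring. -/
noncomputable def MM (k : Type) [Field k] (m : ℕ) : Ideal (MvPowerSeries (Fin m) k) :=
  Ideal.span (Set.range (MvPowerSeries.X : Fin m → MvPowerSeries (Fin m) k))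
/-- `A` (with distinguished maximal ideal `mA`) is `s`-level of type `τ`: the socle
degree is `s` (`mA^s ≠ 0`, `mA^(s+1) = 0`), `Soc(A) := (0 :_A mA) = mA^s` and
`dim_k Soc(A) = τ`. -/
def IsLevelOfType (k : Type) [Field k] (A : Type) [CommRing A] [Algebra k A]
    (mA : Ideal A) (s τ : ℕ) : Prop :=
  mA ^ s ≠ ⊥ ∧ mA ^ (s + 1) = ⊥ ∧
    (⊥ : Ideal A).colon mA = mA ^ s ∧
    Module.finrank k (((⊥ : Ideal A).colon mA).restrictScalars k) = τ

theorem mul_mem_pow_succ_aux {A : Type} [CommRing A] (J : Ideal A) (s : ℕ) (a b : A)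
    (ha : a ∈ J ^ s) (hb : b ∈ J) : a * b ∈ J ^ (s + 1) := by
  rw [pow_succ]
  exact Ideal.mul_mem_mul ha hb

theorem mem_MM_of_supp (k : Type) [Field k] (m : ℕ) (S : Finset (Fin m)) :
    ∀ f : MvPowerSeries (Fin m) k,
      (∀ n : Fin m →₀ ℕ, (∀ i ∈ S, n i = 0) → MvPowerSeries.coeff n f = 0) → f ∈ MM k m := by
  classical
  induction S using Finset.induction_on with
  | empty =>
    intro f hf
    have : f = 0 := by
      ext n
      simpa using hf n (by simp)
    rw [this]
    exact zero_mem _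
  | insert a S _ ih =>
    intro f hf
    let g : MvPowerSeries (Fin m) k :=
      fun n => if n a = 0 then MvPowerSeries.coeff n f else 0
    have hg : ∀ n, MvPowerSeries.coeff n g =
        if n a = 0 then MvPowerSeries.coeff n f else 0 := fun n => rfl
    have h1 : g ∈ MM k m := by
      apply ih
      intro n hn
      rw [hg]
      split_ifs with h
      · exact hf n (by
          intro i hi
          rcases Finset.mem_insert.1 hi with rfl | hi
          · exact h
          · exact hn i hi)
      · rfl
    have h2 : f - g ∈ MM k m := by
      have hd : (MvPowerSeries.X a : MvPowerSeries (Fin m) k) ∣ f - g := by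
        rw [MvPowerSeries.X_dvd_iff]
        intro n hn
        rw [map_sub, hg, if_pos hn, sub_self]
      exact Ideal.mem_of_dvd _ hd (Ideal.subset_span ⟨a, rfl⟩)
    have := add_mem h2 h1
    simpa using this

theorem mem_MM_iff (k : Type) [Field k] (m : ℕ) (f : MvPowerSeries (Fin m) k) :
    f ∈ MM k m ↔ MvPowerSeries.constantCoeff f = 0 := by
  constructor
  · intro h
    have : MM k m ≤ RingHom.ker (MvPowerSeries.constantCoeff (σ := Fin m) (R := k)) := by
      unfold MM
      rw [Ideal.span_le]
      rintro _ ⟨i, rfl⟩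
      simp
    exact this h
  · intro h
    apply mem_MM_of_supp k m Finset.univ
    intro n hn
    have : n = 0 := by
      ext i
      exact hn i (Finset.mem_univ i)
    rw [this]
    simpa using h

theorem sub_C_mem_MM (k : Type) [Field k] (m : ℕ) (f : MvPowerSeries (Fin m) k) :
    f - algebraMap k _ (MvPowerSeries.constantCoeff f) ∈ MM k m := by
  rw [mem_MM_iff]
  simp [MvPowerSeries.algebraMap_apply]

theorem MM_isMaximal (k : Type) [Field k] (m : ℕ) : (MM k m).IsMaximal := by
  have : MM k m = RingHom.ker (MvPowerSeries.constantCoeff (σ := Fin m) (R := k)) := by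
    ext f
    rw [mem_MM_iff, RingHom.mem_ker]
  rw [this]
  exact RingHom.ker_isMaximal_of_surjective _
    (fun c => ⟨MvPowerSeries.C c, by simp⟩)

/-- **Lemma (Iarrobino, recast).** Let `s, τ` be positive integers and
`φ : R → k^τ` a `k`-linear map with `φ(𝓜^s) = k^τ` and `φ(𝓜^(s+1)) = 0`, where
`𝓜 = (x₁,…,x_m)` is the maximal ideal of `R = k⟦x₁,…,x_m⟧`.
If `I = {h ∈ R : φ(Rh) = 0}`, then `R/I` is an Artinian `s`-level local `k`-algebra
of type `τ`. -/
theorem level_algebra_from_linear_functional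
    (k : Type) [Field k] [IsAlgClosed k] [CharZero k] (m s τ : ℕ)
    (hs : 0 < s) (hτ : 0 < τ)
    (φ : MvPowerSeries (Fin m) k →ₗ[k] (Fin τ → k))
    (hsur : Submodule.map φ (((MM k m) ^ s).restrictScalars k) = ⊤)
    (hzero : Submodule.map φ (((MM k m) ^ (s + 1)).restrictScalars k) = ⊥)
    (I : Ideal (MvPowerSeries (Fin m) k))
    (hI : (I : Set (MvPowerSeries (Fin m) k)) =
      {h | ∀ r : MvPowerSeries (Fin m) k, φ (r * h) = 0}) :
    IsArtinianRing (MvPowerSeries (Fin m) k ⧸ I) ∧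
      IsLocalRing (MvPowerSeries (Fin m) k ⧸ I) ∧
      ((MM k m).map (Ideal.Quotient.mk I)).IsMaximal ∧
      IsLevelOfType k (MvPowerSeries (Fin m) k ⧸ I)
        ((MM k m).map (Ideal.Quotient.mk I)) s τ := by
  have hmem : ∀ h, h ∈ I ↔ ∀ r, φ (r * h) = 0 := fun h => by
    rw [← SetLike.mem_coe, hI]
    rfl
  have hz : ∀ h ∈ MM k m ^ (s + 1), φ h = 0 := fun h hh => by
    have : φ h ∈ Submodule.map φ (((MM k m) ^ (s + 1)).restrictScalars k) :=
      ⟨h, hh, rfl⟩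
    rw [hzero] at this
    simpa using this
  have hle : MM k m ^ (s + 1) ≤ I := fun h hh =>
    (hmem h).2 fun r => hz _ (Ideal.mul_mem_left _ r hh)
  have hone : ∀ h ∈ I, φ h = 0 := fun h hh => by simpa using (hmem h).1 hh 1
  -- a criterion for membership
  have hcrit : ∀ h, (∀ r ∈ MM k m, φ (r * h) = 0) → φ h = 0 → h ∈ I := by
    intro h h1 h2
    refine (hmem h).2 fun r => ?_
    have h3 := h1 _ (sub_C_mem_MM k m r)
    rw [sub_mul, map_sub, ← Algebra.smul_def, map_smul, h2, smul_zero, sub_zero] at h3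
    exact h3
  have hcrit' : ∀ h ∈ MM k m ^ s, φ h = 0 → h ∈ I := by
    intro h hh h0
    refine hcrit h (fun r hr => hz _ ?_) h0
    rw [pow_succ']
    exact Ideal.mul_mem_mul hr hh
  have hsur' : ∀ v, ∃ g ∈ MM k m ^ s, φ g = v := fun v => by
    have : v ∈ Submodule.map φ (((MM k m) ^ s).restrictScalars k) := by
      rw [hsur]
      trivial
    exact this
  have hne : ¬ (MM k m ^ s ≤ I) := by
    intro h
    obtain ⟨g, hg, hv⟩ := hsur' (fun _ => 1)
    have h0 := hone g (h hg)
    rw [hv] at h0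
    exact one_ne_zero (congrFun h0 ⟨0, hτ⟩)
  have hItop : I ≠ ⊤ := fun h => hne (h ▸ le_top)
  have hmax := MM_isMaximal k m
  have hIM : I ≤ MM k m := by
    have : IsLocalRing (MvPowerSeries (Fin m) k) := inferInstance
    rw [IsLocalRing.eq_maximalIdeal hmax]
    exact IsLocalRing.le_maximalIdeal hItop
  have hsurj : Function.Surjective (Ideal.Quotient.mk I) := Ideal.Quotient.mk_surjective
  have hnt : Nontrivial (MvPowerSeries (Fin m) k ⧸ I) := Ideal.Quotient.nontrivial_iff.2 hItop
  have hloc : IsLocalRing (MvPowerSeries (Fin m) k ⧸ I) :=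
    IsLocalRing.of_surjective' (Ideal.Quotient.mk I) hsurj
  have hmaxA : ((MM k m).map (Ideal.Quotient.mk I)).IsMaximal := by
    refine (Ideal.map_eq_top_or_isMaximal_of_surjective _ hsurj hmax).resolve_left ?_
    intro h
    have h1 : (1 : MvPowerSeries (Fin m) k ⧸ I) ∈ (MM k m).map (Ideal.Quotient.mk I) := by
      rw [h]
      trivial
    obtain ⟨x, hx, hx1⟩ := (Ideal.mem_map_iff_of_surjective _ hsurj).1 h1
    rw [← map_one (Ideal.Quotient.mk I), Ideal.Quotient.eq] at hx1
    apply hmax.ne_top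
    rw [Ideal.eq_top_iff_one]
    have := sub_mem hx (hIM hx1)
    simpa using this
  have hpow0 : (MM k m).map (Ideal.Quotient.mk I) ^ (s + 1) = ⊥ := by
    rw [← Ideal.map_pow, Ideal.map_eq_bot_iff_le_ker, Ideal.mk_ker]
    exact hle
  have hart : IsArtinianRing (MvPowerSeries (Fin m) k ⧸ I) := by
    rw [isArtinianRing_iff_isNoetherianRing_krullDimLE_zero]
    refine ⟨inferInstance, .mk₀ fun P hP => ?_⟩
    have : (MM k m).map (Ideal.Quotient.mk I) ≤ P :=
      hP.le_of_pow_le (n := s + 1) (hpow0 ▸ bot_le)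
    rw [← hmaxA.eq_of_le hP.ne_top this]
    exact hmaxA
  have hcolon : (⊥ : Ideal (MvPowerSeries (Fin m) k ⧸ I)).colon
      ((MM k m).map (Ideal.Quotient.mk I)) = (MM k m).map (Ideal.Quotient.mk I) ^ s := by
    apply le_antisymm
    · intro a ha
      obtain ⟨h, rfl⟩ := hsurj a
      rw [Submodule.mem_colon] at ha
      obtain ⟨g, hg, hv⟩ := hsur' (φ h)
      have hI' : h - g ∈ I := by
        refine hcrit _ (fun r hr => ?_) (by rw [map_sub, hv, sub_self])
        have h1 := ha _ (Ideal.mem_map_of_mem (Ideal.Quotient.mk I) hr)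
        rw [smul_eq_mul, Ideal.mem_bot, ← map_mul, Ideal.Quotient.eq_zero_iff_mem] at h1
        rw [mul_sub, map_sub, mul_comm r h, hone _ h1, zero_sub, neg_eq_zero]
        apply hz
        rw [pow_succ']
        exact Ideal.mul_mem_mul hr hg
      rw [Ideal.Quotient.eq.2 hI', ← Ideal.map_pow]
      exact Ideal.mem_map_of_mem _ hg
    · intro a ha
      rw [Submodule.mem_colon]
      intro b hb
      have h1 : a * b ∈ (MM k m).map (Ideal.Quotient.mk I) ^ (s + 1) :=
        mul_mem_pow_succ_aux _ s a b ha hb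
      rw [hpow0] at h1
      exact h1
  refine ⟨hart, hloc, hmaxA, ?_, hpow0, hcolon, ?_⟩
  · rw [← Ideal.map_pow, Ne, Ideal.map_eq_bot_iff_le_ker, Ideal.mk_ker]
    exact hne
  · rw [hcolon, ← Ideal.map_pow]
    let ψ : (MvPowerSeries (Fin m) k ⧸ I) →ₗ[k] (Fin τ → k) :=
      (I.restrictScalars k).liftQ φ (fun h hh => hone h hh)
    have hψ : ∀ h, ψ (Ideal.Quotient.mk I h) = φ h := fun h => rfl
    let W := (Ideal.map (Ideal.Quotient.mk I) (MM k m ^ s)).restrictScalars k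
    have hbij : Function.Bijective (ψ.domRestrict W) := by
      constructor
      · rw [injective_iff_map_eq_zero]
        rintro ⟨a, ha⟩ h0
        obtain ⟨h, hh, rfl⟩ := (Ideal.mem_map_iff_of_surjective _ hsurj).1 ha
        have h1 : φ h = 0 := h0
        exact Subtype.ext (Ideal.Quotient.eq_zero_iff_mem.2 (hcrit' h hh h1))
      · intro v
        obtain ⟨g, hg, hv⟩ := hsur' v
        exact ⟨⟨_, Ideal.mem_map_of_mem (Ideal.Quotient.mk I) hg⟩, hv⟩
    have := (LinearEquiv.ofBijective _ hbij).finrank_eq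
    rw [Module.finrank_fin_fun] at this
    exact this
end

section
/- Let H = (1, m, τ) be a numerical sequence with m, τ positive integers. Then H is the h-vector of an Artinian 2-level local k-algebra if and only if τ ≤ C(m+1, 2) = m(m+1)/2. -/
set_option synthInstance.maxHeartbeats 1000000
set_option maxHeartbeats 2000000

/-- The Hilbert function of a `k`-algebra `A` with respect to the ideal `mA`:
`HF_A(j) = dim_k (mA^j / mA^(j+1))`. -/
noncomputable def HF (k : Type) [Field k] (A : Type) [CommRing A] [Algebra k A]
    (mA : Ideal A) (j : ℕ) : ℕ :=
  Module.finrank k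
    (((mA ^ j).restrictScalars k).map ((mA ^ (j + 1)).restrictScalars k).mkQ)
/-- An Artinian `s`-level local `k`-algebra of type `τ` (with residue field `k`). -/
structure ArtinianLevelLocalAlgebra (k : Type) [Field k] (s τ : ℕ) : Type 1 where
  carrier : Type
  [commRing : CommRing carrier]
  [alg : Algebra k carrier]
  [loc : IsLocalRing carrier]
  artinian : IsArtinianRing carrier
  residue_surj : Function.Surjective
    (algebraMap k (carrier ⧸ IsLocalRing.maximalIdeal carrier))
  level : IsLevelOfType k carrier (IsLocalRing.maximalIdeal carrier) s τ

attribute [instance] ArtinianLevelLocalAlgebra.commRing ArtinianLevelLocalAlgebra.alg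
  ArtinianLevelLocalAlgebra.loc


/-- underlying type `k ⊕ V ⊕ W` of the graded algebra attached to structure constants `γ`. -/
@[ext]
structure QA (k : Type) [Field k] {ι T : Type} (γ : Sym2 ι → T → k) : Type where
  a : k
  v : ι → k
  w : T → k

set_option linter.unusedSectionVars false

namespace QA

variable {k : Type} [Field k] {ι T : Type} [Fintype ι] [DecidableEq ι] [Fintype T] [DecidableEq T]
  {γ : Sym2 ι → T → k}

/-- symmetric bilinear map given by `γ` -/
def bil (γ : Sym2 ι → T → k) (v v' : ι → k) : T → k :=
  fun t => ∑ i, ∑ j, v i * v' j * γ s(i, j) t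

lemma bil_comm (v v' : ι → k) : bil γ v v' = bil γ v' v := by
  funext t
  unfold bil
  rw [Finset.sum_comm]
  refine Finset.sum_congr rfl fun i _ => Finset.sum_congr rfl fun j _ => ?_
  rw [Sym2.eq_swap]; ring

lemma bil_add (v v' v'' : ι → k) : bil γ v (v' + v'') = bil γ v v' + bil γ v v'' := by
  funext t
  simp [bil, mul_add, add_mul, Finset.sum_add_distrib]

lemma bil_smul (c : k) (v v' : ι → k) : bil γ v (c • v') = c • bil γ v v' := by
  funext t
  simp only [bil, Pi.smul_apply, smul_eq_mul, Finset.mul_sum]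
  refine Finset.sum_congr rfl fun i _ => Finset.sum_congr rfl fun j _ => ?_
  ring

lemma add_bil (v v' v'' : ι → k) : bil γ (v' + v'') v = bil γ v' v + bil γ v'' v := by
  rw [bil_comm, bil_add, bil_comm v, bil_comm v]

lemma smul_bil (c : k) (v v' : ι → k) : bil γ (c • v') v = c • bil γ v' v := by
  rw [bil_comm, bil_smul, bil_comm v]

lemma bil_single (v : ι → k) (j : ι) (t : T) :
    bil γ v (Pi.single j 1) t = ∑ i, v i * γ s(i, j) t := by
  simp [bil, Pi.single_apply]

@[simp] lemma bil_zero (v : ι → k) : bil γ v 0 = 0 := by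
  funext t; simp [bil]

@[simp] lemma zero_bil (v : ι → k) : bil γ 0 v = 0 := by
  funext t; simp [bil]

/-- coordinates -/
def toProd : QA k γ ≃ k × (ι → k) × (T → k) where
  toFun x := (x.a, x.v, x.w)
  invFun p := ⟨p.1, p.2.1, p.2.2⟩
  left_inv _ := rfl
  right_inv _ := rfl

instance : AddCommGroup (QA k γ) := toProd.addCommGroup
instance : Module k (QA k γ) := toProd.module k

@[simp] lemma add_a (x y : QA k γ) : (x + y).a = x.a + y.a := rfl
@[simp] lemma add_v (x y : QA k γ) : (x + y).v = x.v + y.v := rfl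
@[simp] lemma add_w (x y : QA k γ) : (x + y).w = x.w + y.w := rfl
@[simp] lemma zero_a : (0 : QA k γ).a = 0 := rfl
@[simp] lemma zero_v : (0 : QA k γ).v = 0 := rfl
@[simp] lemma zero_w : (0 : QA k γ).w = 0 := rfl
@[simp] lemma smul_a (c : k) (y : QA k γ) : (c • y).a = c * y.a := rfl
@[simp] lemma smul_v (c : k) (y : QA k γ) : (c • y).v = c • y.v := rfl
@[simp] lemma smul_w (c : k) (y : QA k γ) : (c • y).w = c • y.w := rfl

instance : Mul (QA k γ) :=
  ⟨fun x y => ⟨x.a * y.a, x.a • y.v + y.a • x.v, x.a • y.w + y.a • x.w + bil γ x.v y.v⟩⟩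
instance : One (QA k γ) := ⟨⟨1, 0, 0⟩⟩

@[simp] lemma mul_a (x y : QA k γ) : (x * y).a = x.a * y.a := rfl
@[simp] lemma mul_v (x y : QA k γ) : (x * y).v = x.a • y.v + y.a • x.v := rfl
@[simp] lemma mul_w (x y : QA k γ) :
    (x * y).w = x.a • y.w + y.a • x.w + bil γ x.v y.v := rfl
@[simp] lemma one_a : (1 : QA k γ).a = 1 := rfl
@[simp] lemma one_v : (1 : QA k γ).v = 0 := rfl
@[simp] lemma one_w : (1 : QA k γ).w = 0 := rfl

lemma mul_comm_aux (x y : QA k γ) : x * y = y * x := by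
  ext1
  · simp [mul_comm]
  · simp [add_comm]
  · simp [add_comm, bil_comm x.v]

lemma add_mul_aux (x y z : QA k γ) : (x + y) * z = x * z + y * z := by
  ext1
  · simp [add_mul]
  · simp only [mul_v, add_v, add_a]; module
  · simp only [mul_w, add_v, add_a, add_w, add_bil]; module

instance : CommRing (QA k γ) :=
  { (inferInstance : AddCommGroup (QA k γ)), (inferInstance : Mul (QA k γ)),
    (inferInstance : One (QA k γ)) with
    mul_comm := mul_comm_aux
    right_distrib := add_mul_aux
    left_distrib := fun x y z => by
      rw [mul_comm_aux, add_mul_aux, mul_comm_aux x y, mul_comm_aux x z]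
    zero_mul := fun x => by ext1 <;> simp
    mul_zero := fun x => by ext1 <;> simp
    one_mul := fun x => by ext1 <;> simp
    mul_one := fun x => by ext1 <;> simp
    mul_assoc := fun x y z => by
      ext1
      · simp [mul_assoc]
      · simp only [mul_v, mul_a]; module
      · simp only [mul_w, mul_a, mul_v, add_bil, bil_add, smul_bil, bil_smul]; module }

instance : Algebra k (QA k γ) := Algebra.ofModule
  (fun c x y => by
      ext1
      · simp [mul_assoc]
      · simp only [mul_v, smul_a, smul_v]; module
      · simp only [mul_w, smul_a, smul_v, smul_w, smul_bil]; module)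
  (fun c x y => by
      ext1
      · simp [mul_left_comm]
      · simp only [mul_v, smul_a, smul_v]; module
      · simp only [mul_w, smul_a, smul_v, smul_w, bil_smul]; module)

/-- linear coordinates -/
def lin : QA k γ ≃ₗ[k] k × (ι → k) × (T → k) where
  toEquiv := toProd
  map_add' _ _ := rfl
  map_smul' _ _ := rfl

instance : Module.Finite k (QA k γ) := Module.Finite.equiv lin.symm

lemma isUnit_of {x : QA k γ} (h : x.a ≠ 0) : IsUnit x := by
  refine IsUnit.of_mul_eq_one
    (⟨x.a⁻¹, -(x.a⁻¹ ^ 2) • x.v, -(x.a⁻¹ ^ 2) • x.w + (x.a⁻¹ ^ 3) • bil γ x.v x.v⟩ : QA k γ) ?_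
  ext1
  · simp [h]
  · simp only [mul_v, one_v, smul_smul, ← add_smul]
    rw [show x.a * -x.a⁻¹ ^ 2 + x.a⁻¹ = 0 by field_simp; ring, zero_smul]
  · simp only [mul_w, one_w, smul_smul, smul_add, bil_smul]
    have e : ∀ (p q : T → k) (c d e f : k), c • p + d • q + e • p + f • q = (c+e) • p + (d+f) • q := by
      intros; module
    rw [e, show x.a * -x.a⁻¹ ^ 2 + x.a⁻¹ = 0 by field_simp; ring,
      show x.a * x.a⁻¹ ^ 3 + -x.a⁻¹ ^ 2 = 0 by field_simp; ring]
    simp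

lemma isUnit_iff {x : QA k γ} : IsUnit x ↔ x.a ≠ 0 := by
  refine ⟨fun h h0 => ?_, isUnit_of⟩
  obtain ⟨y, hy⟩ := h.exists_right_inv
  have := congrArg QA.a hy
  simp [h0] at this

instance : Nontrivial (QA k γ) := ⟨⟨0, 1, fun h => by simpa using congrArg QA.a h⟩⟩

instance : IsLocalRing (QA k γ) := IsLocalRing.of_nonunits_add (by
  intro x y hx hy
  simp only [mem_nonunits_iff, isUnit_iff, not_not] at *
  simp [hx, hy])

local notation "𝔪" => IsLocalRing.maximalIdeal (QA k γ)

lemma mem_max {x : QA k γ} : x ∈ 𝔪 ↔ x.a = 0 := by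
  simp [IsLocalRing.mem_maximalIdeal, isUnit_iff]

/-- the inclusion of the degree two part -/
def inW : (T → k) →ₗ[k] QA k γ where
  toFun w := ⟨0, 0, w⟩
  map_add' _ _ := by ext1 <;> simp
  map_smul' _ _ := by ext1 <;> simp

/-- the inclusion of the positive degree part -/
def inVW : ((ι → k) × (T → k)) →ₗ[k] QA k γ where
  toFun w := ⟨0, w.1, w.2⟩
  map_add' _ _ := by ext1 <;> simp
  map_smul' _ _ := by ext1 <;> simp

lemma inW_inj : Function.Injective (inW : (T → k) →ₗ[k] QA k γ) :=
  fun _ _ h => congrArg QA.w h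

lemma inVW_inj : Function.Injective (inVW : ((ι → k) × (T → k)) →ₗ[k] QA k γ) :=
  fun _ _ h => Prod.ext (congrArg QA.v h) (congrArg QA.w h)

lemma mem_sq (hspan : Submodule.span k (Set.range γ) = ⊤) {x : QA k γ} :
    x ∈ 𝔪 ^ 2 ↔ x.a = 0 ∧ x.v = 0 := by
  constructor
  · intro hx
    rw [pow_two] at hx
    refine Submodule.mul_induction_on hx ?_ ?_
    · intro y hy z hz
      rw [mem_max] at hy hz
      simp [hy, hz]
    · rintro y z ⟨h1, h2⟩ ⟨h3, h4⟩
      simp [h1, h2, h3, h4]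
  · rintro ⟨h1, h2⟩
    have key : (⊤ : Submodule k (T → k)) ≤ ((𝔪 ^ 2).restrictScalars k).comap inW := by
      rw [← hspan, Submodule.span_le]
      rintro _ ⟨s, rfl⟩
      induction s using Sym2.ind with
      | _ i j =>
      have : (inW (γ s(i, j)) : QA k γ) =
          (⟨0, Pi.single i 1, 0⟩ : QA k γ) * (⟨0, Pi.single j 1, 0⟩ : QA k γ) := by
        ext1
        · simp [inW]
        · simp [inW]
        · funext t
          simp only [mul_w, zero_smul, zero_add, bil_single]
          simp [inW, Pi.single_apply]
      simp only [SetLike.mem_coe, Submodule.mem_comap, Submodule.restrictScalars_mem]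
      rw [this, pow_two]
      exact Ideal.mul_mem_mul (mem_max.2 rfl) (mem_max.2 rfl)
    have := key (x := x.w) trivial
    have e : inW x.w = x := by ext1 <;> simp [inW, h1, h2]
    simpa [e] using this

lemma cube (hspan : Submodule.span k (Set.range γ) = ⊤) : 𝔪 ^ 3 = ⊥ := by
  rw [pow_succ, eq_bot_iff, Ideal.mul_le]
  intro x hx y hy
  rw [mem_sq hspan] at hx
  rw [mem_max] at hy
  rw [Ideal.mem_bot]
  ext1 <;> simp [hx, hy]

lemma finrank_map_mkQ {M : Type} [AddCommGroup M] [Module k M] [Module.Finite k M]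
    {P Q : Submodule k M} (h : Q ≤ P) :
    Module.finrank k (P.map Q.mkQ) + Module.finrank k Q = Module.finrank k P := by
  have := LinearMap.finrank_range_add_finrank_ker (Q.mkQ.domRestrict P)
  rw [← this, LinearMap.range_domRestrict]
  congr 1
  have e : LinearMap.ker (Q.mkQ.domRestrict P) = Q.comap P.subtype := by
    ext; simp
  rw [e]
  exact (Submodule.comapSubtypeEquivOfLe h).finrank_eq.symm

lemma fr1 : Module.finrank k ((𝔪).restrictScalars k) = Fintype.card ι + Fintype.card T := by
  have : (𝔪).restrictScalars k = LinearMap.range (inVW : _ →ₗ[k] QA k γ) := by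
    ext x
    simp only [Submodule.restrictScalars_mem, mem_max, LinearMap.mem_range]
    constructor
    · intro h
      exact ⟨(x.v, x.w), by ext1 <;> simp [inVW, h]⟩
    · rintro ⟨y, rfl⟩; rfl
  rw [this, LinearMap.finrank_range_of_inj inVW_inj]
  simp

lemma fr2 (hspan : Submodule.span k (Set.range γ) = ⊤) :
    Module.finrank k ((𝔪 ^ 2).restrictScalars k) = Fintype.card T := by
  have : (𝔪 ^ 2).restrictScalars k = LinearMap.range (inW : _ →ₗ[k] QA k γ) := by
    ext x
    simp only [Submodule.restrictScalars_mem, mem_sq hspan, LinearMap.mem_range]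
    constructor
    · intro h
      exact ⟨x.w, by ext1 <;> simp [inW, h]⟩
    · rintro ⟨y, rfl⟩; exact ⟨rfl, rfl⟩
  rw [this, LinearMap.finrank_range_of_inj inW_inj]
  simp

lemma frbot : Module.finrank k ((⊥ : Ideal (QA k γ)).restrictScalars k) = 0 := by
  rw [Submodule.restrictScalars_bot, finrank_bot]

lemma fr0 : Module.finrank k (QA k γ) = 1 + (Fintype.card ι + Fintype.card T) := by
  rw [lin.finrank_eq]; simp

lemma hf_add (n : ℕ) : HF k (QA k γ) 𝔪 n + Module.finrank k ((𝔪 ^ (n+1)).restrictScalars k)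
    = Module.finrank k ((𝔪 ^ n).restrictScalars k) :=
  finrank_map_mkQ (fun _ hx => Ideal.pow_le_pow_right (Nat.le_succ n) hx)

lemma hf (hspan : Submodule.span k (Set.range γ) = ⊤) (j : ℕ) :
    HF k (QA k γ) 𝔪 j = if j = 0 then 1 else if j = 1 then Fintype.card ι else
      if j = 2 then Fintype.card T else 0 := by
  have h := hf_add (k := k) (γ := γ) j
  have h1 := fr1 (k := k) (γ := γ)
  have h2 := fr2 hspan
  have h3 : ∀ n, 3 ≤ n → Module.finrank k ((𝔪 ^ n).restrictScalars k) = 0 := by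
    intro n hn
    have : 𝔪 ^ n = ⊥ := by
      rw [eq_bot_iff, ← cube hspan]; exact Ideal.pow_le_pow_right hn
    rw [this]; exact frbot
  have h0 : Module.finrank k ((𝔪 ^ 0).restrictScalars k) = 1 + (Fintype.card ι + Fintype.card T) := by
    rw [pow_zero, Ideal.one_eq_top, Submodule.restrictScalars_top, finrank_top]
    exact fr0
  match j with
  | 0 => rw [zero_add, pow_one] at h; simp; omega
  | 1 => rw [pow_one] at h; simp at h ⊢; omega
  | 2 => have := h3 3 le_rfl; simp at h ⊢; omega
  | n+3 =>
    have := h3 (n+3) (by omega)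
    simp; omega

lemma colon_eq [Nonempty ι] (hspan : Submodule.span k (Set.range γ) = ⊤)
    (hnd : ∀ j, ∃ t, ∀ i, γ s(i, j) t = if i = j then 1 else 0) :
    (⊥ : Ideal (QA k γ)).colon 𝔪 = 𝔪 ^ 2 := by
  ext x
  rw [mem_sq hspan, Submodule.mem_colon]
  constructor
  · intro h
    have h' : ∀ j, x * (⟨0, Pi.single j 1, 0⟩ : QA k γ) = 0 := fun j => h _ (mem_max.2 rfl)
    constructor
    · obtain ⟨j⟩ := ‹Nonempty ι›
      have := congrFun (congrArg QA.v (h' j)) j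
      simpa using this
    · funext j
      obtain ⟨t, ht⟩ := hnd j
      have := congrFun (congrArg QA.w (h' j)) t
      simpa [bil_single, ht] using this
  · rintro ⟨h1, h2⟩ y hy
    have hy : y.a = 0 := mem_max.1 hy
    change x * y = 0
    ext1 <;> simp [h1, h2, hy]

lemma residue : Function.Surjective (algebraMap k (QA k γ ⧸ 𝔪)) := by
  intro q
  obtain ⟨x, rfl⟩ := Ideal.Quotient.mk_surjective q
  refine ⟨x.a, ?_⟩
  change Ideal.Quotient.mk _ (algebraMap k (QA k γ) x.a) = _
  rw [Ideal.Quotient.eq, mem_max, Algebra.algebraMap_eq_smul_one, sub_eq_add_neg]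
  change x.a * 1 + -x.a = 0
  ring

lemma level [Nonempty ι] [Nonempty T] (hspan : Submodule.span k (Set.range γ) = ⊤)
    (hnd : ∀ j, ∃ t, ∀ i, γ s(i, j) t = if i = j then 1 else 0) :
    IsLevelOfType k (QA k γ) 𝔪 2 (Fintype.card T) := by
  refine ⟨fun h => ?_, cube hspan, colon_eq hspan hnd, ?_⟩
  · have := fr2 hspan
    rw [h, frbot] at this
    exact Fintype.card_ne_zero this.symm
  · rw [colon_eq hspan hnd, fr2 hspan]

end QA

lemma exists_gamma (k : Type) [Field k] (m τ : ℕ) (hτ : 0 < τ) (h : τ ≤ (m + 1).choose 2) :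
    ∃ γ : Sym2 (Fin m) → Fin τ → k, Submodule.span k (Set.range γ) = ⊤ ∧
      ∀ j, ∃ t, ∀ i, γ s(i, j) t = if i = j then 1 else 0 := by
  classical
  -- it suffices that every basis vector is a value of γ
  have red : ∀ γ : Sym2 (Fin m) → Fin τ → k, (∀ t, ∃ s, γ s = Pi.single t 1) →
      Submodule.span k (Set.range γ) = ⊤ := by
    intro γ hγ
    rw [eq_top_iff, ← (Pi.basisFun k (Fin τ)).span_eq]
    refine Submodule.span_mono ?_
    rintro _ ⟨t, rfl⟩
    obtain ⟨s, hs⟩ := hγ t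
    exact ⟨s, by simp [hs]⟩
  by_cases hc : τ ≤ m
  · let c : Fin m → Fin τ := fun i => if hi : i.1 < τ then ⟨i, hi⟩ else ⟨0, hτ⟩
    refine ⟨Sym2.lift ⟨fun i j => if i = j then Pi.single (c i) 1 else 0, ?_⟩, red _ ?_, ?_⟩
    · intro i j
      by_cases hij : i = j
      · subst hij; rfl
      · simp [hij, Ne.symm hij]
    · intro t
      refine ⟨s(⟨t, by omega⟩, ⟨t, by omega⟩), ?_⟩
      simp [c]
    · intro j
      refine ⟨c j, fun i => ?_⟩
      by_cases hij : i = j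
      · subst hij; simp
      · simp [hij]
  · push Not at hc
    have hcard : Fintype.card {a : Sym2 (Fin m) // ¬ a.IsDiag} = m.choose 2 := by
      rw [Sym2.card_subtype_not_diag]; simp
    have hch : (m + 1).choose 2 = m + m.choose 2 := by
      rw [Nat.choose_succ_succ' m 1]; simp
    let e := Fintype.equivFinOfCardEq hcard
    let c : Sym2 (Fin m) → Fin τ := fun s =>
      if hs : ¬ s.IsDiag then
        (if hi : m + (e ⟨s, hs⟩).1 < τ then ⟨m + (e ⟨s, hs⟩).1, hi⟩ else ⟨m, hc⟩)
      else ⟨0, hτ⟩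
    have hcm : ∀ s, ¬ s.IsDiag → m ≤ (c s).1 := by
      intro s hs
      simp only [c, dif_pos hs]
      split_ifs <;> simp
    refine ⟨Sym2.lift ⟨fun i j => if i = j then Pi.single ⟨i.1, by omega⟩ 1
      else Pi.single (c s(i, j)) 1, ?_⟩, red _ ?_, ?_⟩
    · intro i j
      by_cases hij : i = j
      · subst hij; rfl
      · simp only [hij, Ne.symm hij, if_false]
        rw [Sym2.eq_swap]
    · intro t
      by_cases ht : t.1 < m
      · exact ⟨s(⟨t, ht⟩, ⟨t, ht⟩), by simp⟩
      · obtain ⟨⟨s, hs⟩, hst⟩ := e.surjective ⟨t.1 - m, by omega⟩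
        have hct : c s = t := by
          apply Fin.ext
          have : m + (e ⟨s, hs⟩).1 = t.1 := by rw [hst]; simp; omega
          simp only [c, dif_pos hs]
          rw [dif_pos (by omega)]
          exact this
        refine ⟨s, ?_⟩
        induction s using Sym2.ind with
        | _ i j =>
        have hij : i ≠ j := by simpa using hs
        simp [hij, hct]
    · intro j
      refine ⟨⟨j.1, by omega⟩, fun i => ?_⟩
      by_cases hij : i = j
      · subst hij; simp
      · have := hcm s(i, j) (by simpa using hij)
        simp only [Sym2.lift_mk, if_neg hij]
        rw [Pi.single_apply, if_neg]
        intro h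
        have := congrArg Fin.val h
        simp at this
        omega

lemma upper (k : Type) [Field k] (A : Type) [CommRing A] [Algebra k A] (I : Ideal A)
    (h3 : I ^ 3 = ⊥) (m : ℕ) (hm : 0 < m) (h1 : HF k A I 1 = m) :
    Module.finrank k ((I ^ 2).restrictScalars k) ≤ (m + 1).choose 2 := by
  classical
  unfold HF at h1
  set U := ((I ^ 1).restrictScalars k).map ((I ^ (1 + 1)).restrictScalars k).mkQ with hU
  have : Module.Finite k U := Module.finite_of_finrank_pos (by omega)
  let b := Module.finBasisOfFinrankEq k U h1
  have hx : ∀ i, ∃ x ∈ I, ((I ^ (1 + 1)).restrictScalars k).mkQ x = b i := by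
    intro i
    obtain ⟨x, hx, hxe⟩ := (b i).2
    exact ⟨x, by simpa using hx, hxe⟩
  choose x hxI hxb using hx
  have dec : ∀ a ∈ I, ∃ c : Fin m → k, a - ∑ i, c i • x i ∈ I ^ 2 := by
    intro a ha
    let u : U := ⟨((I ^ (1 + 1)).restrictScalars k).mkQ a, ⟨a, by simpa using ha, rfl⟩⟩
    refine ⟨b.repr u, ?_⟩
    have h := congrArg Subtype.val (b.sum_repr u)
    suffices hz : ((I ^ (1 + 1)).restrictScalars k).mkQ (a - ∑ i, b.repr u i • x i) = 0 by
      rw [← LinearMap.mem_ker, Submodule.ker_mkQ] at hz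
      exact hz
    rw [map_sub, sub_eq_zero]
    change u.1 = _
    rw [← h]
    simp only [AddSubmonoidClass.coe_finsetSum, map_sum, map_smul, Submodule.coe_smul, ← hxb]
  have kill : ∀ p ∈ I ^ 2, ∀ q ∈ I, p * q = 0 := by
    intro p hp q hq
    have : p * q ∈ I ^ 3 := by rw [pow_succ]; exact Ideal.mul_mem_mul hp hq
    rwa [h3, Ideal.mem_bot] at this
  let g : Sym2 (Fin m) → A := Sym2.lift ⟨fun i j => x i * x j, fun i j => mul_comm _ _⟩
  have hle : (I ^ 2).restrictScalars k ≤ Submodule.span k (Set.range g) := by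
    intro y hy
    rw [Submodule.restrictScalars_mem, pow_two] at hy
    refine Submodule.mul_induction_on hy ?_ (fun _ _ => Submodule.add_mem _)
    intro p hp q hq
    obtain ⟨c, hc⟩ := dec p hp
    obtain ⟨d, hd⟩ := dec q hq
    have hs : ∑ i, c i • x i ∈ I := Ideal.sum_mem _ fun i _ =>
      ((I.restrictScalars k).smul_mem (c i) (hxI i))
    have e : p * q = (∑ i, c i • x i) * (∑ i, d i • x i) := by
      have e1 := kill _ hc _ hq
      have e2 := kill _ hd _ hs
      linear_combination e1 + e2
    rw [e, Finset.sum_mul_sum]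
    refine Submodule.sum_mem _ fun i _ => Submodule.sum_mem _ fun j _ => ?_
    rw [smul_mul_smul_comm]
    exact Submodule.smul_mem _ _ (Submodule.subset_span ⟨s(i, j), rfl⟩)
  have : Module.Finite k (Submodule.span k (Set.range g)) :=
    Module.Finite.span_of_finite k (Set.finite_range g)
  calc _ ≤ Module.finrank k (Submodule.span k (Set.range g)) := Submodule.finrank_mono hle
    _ ≤ Fintype.card (Sym2 (Fin m)) := finrank_range_le_card g
    _ = _ := by rw [Sym2.card]; simp

/-- **Proposition.** Let `H = (1, m, τ)` with `m, τ` positive. Then `H` is the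
h-vector of an Artinian `2`-level local `k`-algebra if and only if
`τ ≤ C(m+1, 2) = m(m+1)/2`. -/
theorem h_vector_socle_degree_two
    (k : Type) [Field k] [IsAlgClosed k] [CharZero k]
    (m τ : ℕ) (hm : 0 < m) (hτ : 0 < τ) :
    (∃ B : ArtinianLevelLocalAlgebra k 2 τ,
        ∀ j, HF k B.carrier (IsLocalRing.maximalIdeal B.carrier) j =
          (if j = 0 then 1 else if j = 1 then m else if j = 2 then τ else 0)) ↔
      τ ≤ (m + 1).choose 2 := by
  constructor
  · rintro ⟨B, hB⟩
    obtain ⟨-, h3, hc, hf⟩ := B.level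
    have h1 := hB 1
    simp only [one_ne_zero, if_false, if_true] at h1
    rw [hc] at hf
    rw [← hf]
    exact upper k B.carrier _ h3 m hm h1
  · intro h
    obtain ⟨γ, hspan, hnd⟩ := exists_gamma k m τ hτ h
    have : Nonempty (Fin m) := ⟨⟨0, hm⟩⟩
    have : Nonempty (Fin τ) := ⟨⟨0, hτ⟩⟩
    refine ⟨{ carrier := QA k γ
              artinian := IsArtinianRing.of_finite k _
              residue_surj := QA.residue
              level := by simpa using QA.level hspan hnd }, fun j => ?_⟩
    have := QA.hf hspan j
    simpa using this
end

section
/- Let H = (1, m, n, τ) be an h-vector with m > n ≥ τ > 0. Then H is the h-vector of an Artinian 3-level local k-algebra. -/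
set_option synthInstance.maxHeartbeats 1000000
set_option maxHeartbeats 2000000

/-- The dimension of the degree-`i` homogeneous component of the standard graded algebra
`k[x₁,…,x_{m'}]/J`. -/
noncomputable def gradedDim (k : Type) [Field k] (m' : ℕ)
    (J : Ideal (MvPolynomial (Fin m') k)) (i : ℕ) : ℕ :=
  Module.finrank k
    ((MvPolynomial.homogeneousSubmodule (Fin m') k i).map
      ((J : Submodule (MvPolynomial (Fin m') k) (MvPolynomial (Fin m') k)).restrictScalars k).mkQ)

/-- A homogeneous ideal: an ideal generated by homogeneous polynomials. -/
def IsHomogeneousIdeal {k : Type} [Field k] {m' : ℕ}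
    (J : Ideal (MvPolynomial (Fin m') k)) : Prop :=
  ∃ S : Set (MvPolynomial (Fin m') k),
    (∀ p ∈ S, ∃ d, p.IsHomogeneous d) ∧ J = Ideal.span S

/-- A numerical function is an O-sequence (i.e. satisfies the conditions of Macaulay's
theorem) iff it is the Hilbert function of some standard graded `k`-algebra. -/
def IsOSequence (k : Type) [Field k] (H : ℕ → ℕ) : Prop :=
  ∃ (m' : ℕ) (J : Ideal (MvPolynomial (Fin m') k)),
    IsHomogeneousIdeal J ∧ ∀ i, gradedDim k m' J i = H i

/-- The numerical sequence `(a, b, c, d, 0, 0, …)`. -/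
def hVec (a b c d : ℕ) : ℕ → ℕ :=
  fun j => if j = 0 then a else if j = 1 then b else if j = 2 then c else
    if j = 3 then d else 0
/-- The underlying space `k ⊕ V ⊕ W ⊕ V ⊕ S`, with basis `1, x_i, y_j, x_i², s_t`. -/
@[ext] structure LvAlg (k : Type) [Field k] (n p t : ℕ)
    (φ : (Fin n → k) →ₗ[k] (Fin t → k)) (ψ : (Fin p → k) →ₗ[k] (Fin t → k)) : Type where
  c0 : k
  x1 : Fin n → k
  y1 : Fin p → k
  x2 : Fin n → k
  s3 : Fin t → k

namespace LvAlg

variable {k : Type} [Field k] {n p t : ℕ}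
  {φ : (Fin n → k) →ₗ[k] (Fin t → k)} {ψ : (Fin p → k) →ₗ[k] (Fin t → k)}

instance : Zero (LvAlg k n p t φ ψ) := ⟨⟨0, 0, 0, 0, 0⟩⟩
instance : One (LvAlg k n p t φ ψ) := ⟨⟨1, 0, 0, 0, 0⟩⟩
instance : Add (LvAlg k n p t φ ψ) :=
  ⟨fun a b => ⟨a.c0 + b.c0, a.x1 + b.x1, a.y1 + b.y1, a.x2 + b.x2, a.s3 + b.s3⟩⟩
instance : Neg (LvAlg k n p t φ ψ) :=
  ⟨fun a => ⟨-a.c0, -a.x1, -a.y1, -a.x2, -a.s3⟩⟩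
instance : SMul k (LvAlg k n p t φ ψ) :=
  ⟨fun r a => ⟨r • a.c0, r • a.x1, r • a.y1, r • a.x2, r • a.s3⟩⟩
instance : Mul (LvAlg k n p t φ ψ) :=
  ⟨fun a b => ⟨a.c0 * b.c0, a.c0 • b.x1 + b.c0 • a.x1, a.c0 • b.y1 + b.c0 • a.y1,
    a.c0 • b.x2 + b.c0 • a.x2 + a.x1 * b.x1,
    a.c0 • b.s3 + b.c0 • a.s3 + φ (a.x1 * b.x2 + a.x2 * b.x1) + ψ (a.y1 * b.y1)⟩⟩

theorem zero_def : (0 : LvAlg k n p t φ ψ) = ⟨0, 0, 0, 0, 0⟩ := rfl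
theorem one_def : (1 : LvAlg k n p t φ ψ) = ⟨1, 0, 0, 0, 0⟩ := rfl
theorem add_def (a b : LvAlg k n p t φ ψ) : a + b =
  ⟨a.c0 + b.c0, a.x1 + b.x1, a.y1 + b.y1, a.x2 + b.x2, a.s3 + b.s3⟩ := rfl
theorem neg_def (a : LvAlg k n p t φ ψ) : -a =
  ⟨-a.c0, -a.x1, -a.y1, -a.x2, -a.s3⟩ := rfl
theorem smul_def (r : k) (a : LvAlg k n p t φ ψ) : r • a =
  ⟨r • a.c0, r • a.x1, r • a.y1, r • a.x2, r • a.s3⟩ := rfl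
theorem mul_def (a b : LvAlg k n p t φ ψ) : a * b =
  ⟨a.c0 * b.c0, a.c0 • b.x1 + b.c0 • a.x1, a.c0 • b.y1 + b.c0 • a.y1,
    a.c0 • b.x2 + b.c0 • a.x2 + a.x1 * b.x1,
    a.c0 • b.s3 + b.c0 • a.s3 + φ (a.x1 * b.x2 + a.x2 * b.x1) + ψ (a.y1 * b.y1)⟩ := rfl

theorem mul_comm_aux (a b : LvAlg k n p t φ ψ) : a * b = b * a := by
  rw [mul_def, mul_def, LvAlg.mk.injEq]
  refine ⟨by ring, by abel, by abel, ?_, ?_⟩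
  · rw [mul_comm a.x1]; abel
  · rw [mul_comm a.x1, mul_comm a.x2, mul_comm a.y1, add_comm (b.x2 * a.x1)]; abel

theorem mul_assoc_aux (a b c : LvAlg k n p t φ ψ) : a * b * c = a * (b * c) := by
  simp only [mul_def, LvAlg.mk.injEq]
  refine ⟨by ring, by module, by module, ?_, ?_⟩
  · simp only [add_mul, mul_add, smul_mul_assoc, mul_smul_comm]; module
  · simp only [add_mul, mul_add, smul_mul_assoc, mul_smul_comm, map_add, map_smul, mul_assoc]
    module

theorem left_distrib_aux (a b c : LvAlg k n p t φ ψ) : a * (b + c) = a * b + a * c := by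
  simp only [mul_def, add_def, LvAlg.mk.injEq]
  refine ⟨by ring, by module, by module, ?_, ?_⟩
  · simp only [mul_add]; module
  · simp only [mul_add, map_add]; module

theorem one_mul_aux (a : LvAlg k n p t φ ψ) : 1 * a = a := by
  simp [mul_def, one_def]

theorem zero_mul_aux (a : LvAlg k n p t φ ψ) : 0 * a = 0 := by
  simp [mul_def, zero_def]

instance : CommRing (LvAlg k n p t φ ψ) where
  add_assoc a b c := by simp only [add_def, add_assoc]
  zero_add a := by simp [add_def, zero_def]
  add_zero a := by simp [add_def, zero_def]
  add_comm a b := by simp [add_def, add_comm]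
  nsmul := nsmulRec
  zsmul := zsmulRec
  neg_add_cancel a := by simp [add_def, neg_def, zero_def]
  mul_assoc := mul_assoc_aux
  one_mul := one_mul_aux
  mul_one a := by rw [mul_comm_aux, one_mul_aux]
  zero_mul := zero_mul_aux
  mul_zero a := by rw [mul_comm_aux, zero_mul_aux]
  left_distrib := left_distrib_aux
  right_distrib a b c := by
    rw [mul_comm_aux, left_distrib_aux, mul_comm_aux c a, mul_comm_aux c b]
  mul_comm := mul_comm_aux

instance : Module k (LvAlg k n p t φ ψ) where
  one_smul a := by simp [smul_def]
  mul_smul r s a := by simp [smul_def, mul_smul, mul_assoc]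
  smul_zero r := by simp [smul_def, zero_def]
  smul_add r a b := by simp [smul_def, add_def, mul_add]
  add_smul r s a := by simp [smul_def, add_def, add_smul, add_mul]
  zero_smul a := by simp [smul_def, zero_def]

theorem smul_mul_aux (r : k) (a b : LvAlg k n p t φ ψ) : (r • a) * b = r • (a * b) := by
  simp only [mul_def, smul_def, LvAlg.mk.injEq, smul_eq_mul]
  refine ⟨by ring, by module, by module, ?_, ?_⟩
  · simp only [smul_mul_assoc]; module
  · simp only [smul_mul_assoc, map_add, map_smul]; module

instance : Algebra k (LvAlg k n p t φ ψ) :=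
  Algebra.ofModule smul_mul_aux (fun r a b => by
    rw [mul_comm a, smul_mul_aux, mul_comm b])

theorem sub_def (a b : LvAlg k n p t φ ψ) : a - b =
    ⟨a.c0 - b.c0, a.x1 - b.x1, a.y1 - b.y1, a.x2 - b.x2, a.s3 - b.s3⟩ := by
  rw [sub_eq_add_neg, neg_def, add_def]; simp [sub_eq_add_neg]

variable (φ ψ) in
/-- The algebra as a product vector space. -/
def prodEquiv : (k × (Fin n → k) × (Fin p → k) × (Fin n → k) × (Fin t → k)) ≃ₗ[k]
    LvAlg k n p t φ ψ where
  toFun v := ⟨v.1, v.2.1, v.2.2.1, v.2.2.2.1, v.2.2.2.2⟩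
  invFun a := (a.c0, a.x1, a.y1, a.x2, a.s3)
  map_add' _ _ := rfl
  map_smul' _ _ := rfl
  left_inv _ := rfl
  right_inv _ := rfl

instance : Module.Finite k (LvAlg k n p t φ ψ) := Module.Finite.equiv (prodEquiv φ ψ)

instance : IsArtinianRing (LvAlg k n p t φ ψ) := IsArtinianRing.of_finite k _

variable (φ ψ) in
/-- The augmentation. -/
def aug : LvAlg k n p t φ ψ →+* k where
  toFun a := a.c0
  map_zero' := rfl
  map_one' := rfl
  map_add' _ _ := rfl
  map_mul' _ _ := rfl

theorem aug_surj : Function.Surjective (aug φ ψ) := fun r => ⟨⟨r, 0, 0, 0, 0⟩, rfl⟩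

/-- `⟨x1, y1, x2, s3⟩`. -/
def I1 : Ideal (LvAlg k n p t φ ψ) where
  carrier := {a | a.c0 = 0}
  zero_mem' := rfl
  add_mem' := by
    intro a b ha hb
    simp only [Set.mem_ofPred_eq] at *
    simp [add_def, ha, hb]
  smul_mem' := by
    intro a b hb
    simp only [Set.mem_ofPred_eq] at *
    simp [mul_def, hb]

/-- `⟨x2, s3⟩`. -/
def I2 : Ideal (LvAlg k n p t φ ψ) where
  carrier := {a | a.c0 = 0 ∧ a.x1 = 0 ∧ a.y1 = 0}
  zero_mem' := ⟨rfl, rfl, rfl⟩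
  add_mem' := by
    rintro a b ⟨h1, h2, h3⟩ ⟨h4, h5, h6⟩
    simp [add_def, *]
  smul_mem' := by
    rintro a b ⟨h1, h2, h3⟩
    simp [mul_def, *]

/-- `⟨s3⟩`. -/
def I3 : Ideal (LvAlg k n p t φ ψ) where
  carrier := {a | a.c0 = 0 ∧ a.x1 = 0 ∧ a.y1 = 0 ∧ a.x2 = 0}
  zero_mem' := ⟨rfl, rfl, rfl, rfl⟩
  add_mem' := by
    rintro a b ⟨h1, h2, h3, h7⟩ ⟨h4, h5, h6, h8⟩
    simp [add_def, *]
  smul_mem' := by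
    rintro a b ⟨h1, h2, h3, h7⟩
    simp [mul_def, *]

theorem mem_I1 (a : LvAlg k n p t φ ψ) : a ∈ I1 ↔ a.c0 = 0 := Iff.rfl
theorem mem_I2 (a : LvAlg k n p t φ ψ) : a ∈ I2 ↔ a.c0 = 0 ∧ a.x1 = 0 ∧ a.y1 = 0 := Iff.rfl
theorem mem_I3 (a : LvAlg k n p t φ ψ) :
    a ∈ I3 ↔ a.c0 = 0 ∧ a.x1 = 0 ∧ a.y1 = 0 ∧ a.x2 = 0 := Iff.rfl

theorem I1_sq (hφ : Function.Surjective φ) : (I1 : Ideal (LvAlg k n p t φ ψ)) ^ 2 = I2 := by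
  rw [pow_two]
  apply le_antisymm
  · rw [Ideal.mul_le]
    intro a ha b hb
    rw [mem_I1] at ha hb
    simp [mem_I2, mul_def, ha, hb]
  · rintro ⟨a, b, c, d, e⟩ ⟨h1, h2, h3⟩
    obtain ⟨v, rfl⟩ := hφ e
    simp only at h1 h2 h3
    have : (⟨a, b, c, d, φ v⟩ : LvAlg k n p t φ ψ) = ⟨0, 1, 0, 0, 0⟩ * ⟨0, d, 0, v, 0⟩ := by
      simp [mul_def, h1, h2, h3]
    rw [this]
    exact Ideal.mul_mem_mul rfl rfl

theorem I1_cube (hφ : Function.Surjective φ) : (I1 : Ideal (LvAlg k n p t φ ψ)) ^ 3 = I3 := by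
  rw [pow_succ, I1_sq hφ]
  apply le_antisymm
  · rw [Ideal.mul_le]
    rintro a ⟨h1, h2, h3⟩ b hb
    rw [mem_I1] at hb
    simp [mem_I3, mul_def, *]
  · rintro ⟨a, b, c, d, e⟩ ⟨h1, h2, h3, h4⟩
    obtain ⟨v, rfl⟩ := hφ e
    simp only at h1 h2 h3 h4
    have : (⟨a, b, c, d, φ v⟩ : LvAlg k n p t φ ψ) = ⟨0, 0, 0, 1, 0⟩ * ⟨0, v, 0, 0, 0⟩ := by
      simp [mul_def, h1, h2, h3, h4]
    rw [this]
    exact Ideal.mul_mem_mul ⟨rfl, rfl, rfl⟩ rfl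

theorem I1_four (hφ : Function.Surjective φ) : (I1 : Ideal (LvAlg k n p t φ ψ)) ^ 4 = ⊥ := by
  rw [pow_succ, I1_cube hφ, eq_bot_iff, Ideal.mul_le]
  rintro a ⟨h1, h2, h3, h4⟩ b hb
  rw [mem_I1] at hb
  simp [mul_def, zero_def, *]

theorem isLocalHom_aug (hφ : Function.Surjective φ) : IsLocalHom (aug φ ψ) := by
  constructor
  intro a ha
  have hn : IsNilpotent (a - algebraMap k _ (aug φ ψ a)) := by
    refine ⟨4, ?_⟩
    have : a - algebraMap k _ (aug φ ψ a) ∈ (I1 : Ideal (LvAlg k n p t φ ψ)) := by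
      rw [mem_I1, sub_def, Algebra.algebraMap_eq_smul_one, smul_def]
      simp [one_def, aug]
    have h4 := Ideal.pow_mem_pow this 4
    rwa [I1_four hφ, Ideal.mem_bot] at h4
  have := hn.isUnit_add_left_of_commute (ha.map (algebraMap k (LvAlg k n p t φ ψ)))
    (Commute.all _ _)
  simpa using this

theorem isLocalRing (hφ : Function.Surjective φ) : IsLocalRing (LvAlg k n p t φ ψ) :=
  haveI := isLocalHom_aug (ψ := ψ) hφ
  RingHom.domain_isLocalRing (aug φ ψ)

theorem max_eq [IsLocalRing (LvAlg k n p t φ ψ)] :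
    IsLocalRing.maximalIdeal (LvAlg k n p t φ ψ) = I1 := by
  have h := RingHom.ker_isMaximal_of_surjective (aug φ ψ) aug_surj
  rw [← IsLocalRing.eq_maximalIdeal h]
  ext a
  rfl

theorem soc_eq (hn : 0 < n)
    (h1 : ∀ i c, φ (Pi.single i c) = 0 → c = 0) (h2 : ∀ i c, ψ (Pi.single i c) = 0 → c = 0) :
    (⊥ : Ideal (LvAlg k n p t φ ψ)).colon (I1 : Ideal (LvAlg k n p t φ ψ)) = I3 := by
  ext a
  rw [Submodule.mem_colon]
  constructor
  · intro h
    have hx : ∀ i, a * ⟨0, Pi.single i 1, 0, 0, 0⟩ = 0 := fun i => by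
      simpa using h ⟨0, Pi.single i 1, 0, 0, 0⟩ (by exact rfl)
    have hy : ∀ i, a * ⟨0, 0, Pi.single i 1, 0, 0⟩ = 0 := fun i => by
      simpa using h ⟨0, 0, Pi.single i 1, 0, 0⟩ (by exact rfl)
    have hsn : ∀ (v : Fin n → k) i, v * Pi.single i 1 = Pi.single i (v i) := by
      intro v i; ext j; by_cases hj : j = i
      · subst hj; simp
      · simp [hj]
    have hsp : ∀ (v : Fin p → k) i, v * Pi.single i 1 = Pi.single i (v i) := by
      intro v i; ext j; by_cases hj : j = i
      · subst hj; simp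
      · simp [hj]
    simp only [mul_def, zero_def, LvAlg.mk.injEq, mul_zero, smul_zero, zero_smul, add_zero,
      zero_add, map_zero, hsn, hsp] at hx hy
    have h0 : a.c0 = 0 := by
      have := congrFun (hx ⟨0, hn⟩).2.1 ⟨0, hn⟩
      simpa using this
    refine ⟨h0, ?_, ?_, ?_⟩
    · ext i
      simpa using congrFun (hx i).2.2.2.1 i
    · ext i
      exact h2 i _ (hy i).2.2.2.2
    · ext i
      exact h1 i _ (hx i).2.2.2.2
  · rintro ⟨h1, h2, h3, h4⟩ b hb
    have hb : b.c0 = 0 := hb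
    simp [mul_def, zero_def, *]

end LvAlg

theorem finrank_map_mkQ_aux {k A E : Type} [Field k] [AddCommGroup A] [Module k A]
    [AddCommGroup E] [Module k E] (P Q : Submodule k A) (f : E →ₗ[k] A)
    (h1 : ∀ e, f e ∈ P) (h2 : ∀ e, f e ∈ Q → e = 0) (h3 : ∀ a ∈ P, ∃ e, a - f e ∈ Q) :
    Module.finrank k (P.map Q.mkQ) = Module.finrank k E := by
  have hr : P.map Q.mkQ = LinearMap.range (Q.mkQ ∘ₗ f) := by
    ext z
    constructor
    · rintro ⟨a, ha, rfl⟩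
      obtain ⟨e, he⟩ := h3 a ha
      refine ⟨e, ?_⟩
      symm
      simpa [Submodule.Quotient.eq] using he
    · rintro ⟨e, rfl⟩
      exact ⟨f e, h1 e, rfl⟩
  rw [hr]
  apply LinearMap.finrank_range_of_inj
  rw [← LinearMap.ker_eq_bot, LinearMap.ker_eq_bot']
  intro e he
  exact h2 e (by simpa using he)

namespace LvAlg

variable {k : Type} [Field k] {n p t : ℕ}
  {φ : (Fin n → k) →ₗ[k] (Fin t → k)} {ψ : (Fin p → k) →ₗ[k] (Fin t → k)}

/-- Inclusion of degree zero. -/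
def inc0 : k →ₗ[k] LvAlg k n p t φ ψ where
  toFun r := ⟨r, 0, 0, 0, 0⟩
  map_add' _ _ := by simp [add_def]
  map_smul' _ _ := by simp [smul_def]

/-- Inclusion of degree one. -/
def inc1 : ((Fin n → k) × (Fin p → k)) →ₗ[k] LvAlg k n p t φ ψ where
  toFun r := ⟨0, r.1, r.2, 0, 0⟩
  map_add' _ _ := by simp [add_def]
  map_smul' _ _ := by simp [smul_def]

/-- Inclusion of degree two. -/
def inc2 : (Fin n → k) →ₗ[k] LvAlg k n p t φ ψ where
  toFun r := ⟨0, 0, 0, r, 0⟩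
  map_add' _ _ := by simp [add_def]
  map_smul' _ _ := by simp [smul_def]

/-- Inclusion of degree three. -/
def inc3 : (Fin t → k) →ₗ[k] LvAlg k n p t φ ψ where
  toFun r := ⟨0, 0, 0, 0, r⟩
  map_add' _ _ := by simp [add_def]
  map_smul' _ _ := by simp [smul_def]

theorem finrank_I3 :
    Module.finrank k ((I3 : Ideal (LvAlg k n p t φ ψ)).restrictScalars k) = t := by
  have hr : (I3 : Ideal (LvAlg k n p t φ ψ)).restrictScalars k = LinearMap.range inc3 := by
    ext a
    rw [Submodule.restrictScalars_mem, mem_I3]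
    constructor
    · rintro ⟨h1, h2, h3, h4⟩
      exact ⟨a.s3, LvAlg.ext h1.symm h2.symm h3.symm h4.symm rfl⟩
    · rintro ⟨e, rfl⟩
      exact ⟨rfl, rfl, rfl, rfl⟩
  rw [hr, LinearMap.finrank_range_of_inj]
  · simp
  · intro a b h
    exact congrArg LvAlg.s3 h

theorem HF_eq (hφ : Function.Surjective φ) (j : ℕ) :
    HF k (LvAlg k n p t φ ψ) I1 j = hVec 1 (n + p) n t j := by
  unfold HF
  match j with
  | 0 =>
    rw [finrank_map_mkQ_aux _ _ inc0]
    · simp [hVec]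
    · intro e; simp
    · intro e he
      rw [zero_add, pow_one] at he
      exact he
    · intro a _
      refine ⟨a.c0, ?_⟩
      rw [zero_add, pow_one, Submodule.restrictScalars_mem, mem_I1, sub_def]
      simp [inc0]
  | 1 =>
    rw [I1_sq hφ, pow_one, finrank_map_mkQ_aux _ _ inc1]
    · simp [hVec]
    · intro e; exact rfl
    · rintro e ⟨-, h1, h2⟩
      exact Prod.ext h1 h2
    · intro a ha
      refine ⟨(a.x1, a.y1), ?_⟩
      have ha : a.c0 = 0 := ha
      rw [Submodule.restrictScalars_mem, mem_I2, sub_def]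
      simp [inc1, ha]
  | 2 =>
    rw [I1_sq hφ, I1_cube hφ, finrank_map_mkQ_aux _ _ inc2]
    · simp [hVec]
    · intro e; exact ⟨rfl, rfl, rfl⟩
    · rintro e ⟨-, -, -, h⟩
      exact h
    · rintro a ⟨h1, h2, h3⟩
      refine ⟨a.x2, ?_⟩
      rw [Submodule.restrictScalars_mem, mem_I3, sub_def]
      simp [inc2, h1, h2, h3]
  | 3 =>
    rw [I1_four hφ, I1_cube hφ, finrank_map_mkQ_aux _ _ inc3]
    · simp [hVec]
    · intro e; exact ⟨rfl, rfl, rfl, rfl⟩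
    · intro e h
      exact congrArg LvAlg.s3 ((Submodule.mem_bot _).1 h)
    · rintro a ⟨h1, h2, h3, h4⟩
      refine ⟨a.s3, ?_⟩
      rw [Submodule.restrictScalars_mem, Ideal.mem_bot, sub_def]
      simp [inc3, zero_def, h1, h2, h3, h4]
  | j + 4 =>
    have : (I1 : Ideal (LvAlg k n p t φ ψ)) ^ (j + 4) = ⊥ := by
      rw [pow_add, I1_four hφ, Ideal.mul_bot]
    rw [this, Submodule.restrictScalars_bot, Submodule.map_bot, finrank_bot]
    simp [hVec]

end LvAlg

/-- **Proposition.** Let `H = (1, m, n, τ)` be an h-vector with `m > n ≥ τ > 0`. Then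
`H` is the h-vector of an Artinian `3`-level local `k`-algebra. -/
theorem h_vector_three_level_nonincreasing
    (k : Type) [Field k] [IsAlgClosed k] [CharZero k] (m n τ : ℕ)
    (hO : IsOSequence k (hVec 1 m n τ))
    (h1 : n < m) (h2 : τ ≤ n) (h3 : 0 < τ) :
    ∃ B : ArtinianLevelLocalAlgebra k 3 τ,
      ∀ j, HF k B.carrier (IsLocalRing.maximalIdeal B.carrier) j = hVec 1 m n τ j := by
  obtain ⟨p, rfl⟩ := Nat.exists_eq_add_of_lt h1
  let γ : Fin n → Fin τ := fun i => if h : i.1 < τ then ⟨i.1, h⟩ else ⟨0, h3⟩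
  let φ : (Fin n → k) →ₗ[k] (Fin τ → k) :=
    Fintype.linearCombination k (fun i => Pi.single (γ i) (1 : k))
  let ψ : (Fin (p + 1) → k) →ₗ[k] (Fin τ → k) :=
    Fintype.linearCombination k (fun _ => Pi.single ⟨0, h3⟩ (1 : k))
  have hφ1 : ∀ i c, φ (Pi.single i c) = 0 → c = 0 := by
    intro i c h
    have := congrFun h (γ i)
    simpa [φ, Fintype.linearCombination_apply_single] using this
  have hψ1 : ∀ i c, ψ (Pi.single i c) = 0 → c = 0 := by
    intro i c h
    have := congrFun h ⟨0, h3⟩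
    simpa [ψ, Fintype.linearCombination_apply_single] using this
  have hφ : Function.Surjective φ := by
    intro s
    refine ⟨∑ u : Fin τ, Pi.single (Fin.castLE h2 u) (s u), ?_⟩
    rw [map_sum]
    have hγ : ∀ u : Fin τ, γ (Fin.castLE h2 u) = u := by
      intro u
      simp [γ]
    have : ∀ u : Fin τ, φ (Pi.single (Fin.castLE h2 u) (s u)) = Pi.single u (s u) := by
      intro u
      simp only [φ, Fintype.linearCombination_apply_single, hγ]
      rw [← Pi.single_smul]
      simp
    simp only [this]
    exact Finset.univ_sum_single s
  haveI hloc : IsLocalRing (LvAlg k n (p + 1) τ φ ψ) := LvAlg.isLocalRing hφ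
  have hsoc := LvAlg.soc_eq (φ := φ) (ψ := ψ) (lt_of_lt_of_le h3 h2) hφ1 hψ1
  refine ⟨{ carrier := LvAlg k n (p + 1) τ φ ψ, artinian := inferInstance,
            residue_surj := ?_, level := ?_ }, ?_⟩
  · intro z
    obtain ⟨a, rfl⟩ := Ideal.Quotient.mk_surjective z
    refine ⟨a.c0, ?_⟩
    rw [← Ideal.Quotient.mk_algebraMap, Ideal.Quotient.eq, LvAlg.max_eq, LvAlg.mem_I1,
      LvAlg.sub_def, Algebra.algebraMap_eq_smul_one, LvAlg.smul_def]
    simp [LvAlg.one_def]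
  · rw [LvAlg.max_eq]
    refine ⟨?_, LvAlg.I1_four hφ, ?_, ?_⟩
    · rw [LvAlg.I1_cube hφ]
      intro h
      have hm : (⟨0, 0, 0, 0, 1⟩ : LvAlg k n (p + 1) τ φ ψ) ∈
          (LvAlg.I3 : Ideal (LvAlg k n (p + 1) τ φ ψ)) := ⟨rfl, rfl, rfl, rfl⟩
      rw [h, Ideal.mem_bot] at hm
      have := congrFun (congrArg LvAlg.s3 hm) ⟨0, h3⟩
      exact one_ne_zero this
    · rw [LvAlg.I1_cube hφ, hsoc]
    · rw [hsoc, LvAlg.finrank_I3]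
  · intro j
    have := LvAlg.HF_eq (ψ := ψ) hφ j
    simp only [LvAlg.max_eq]
    exact this
end

section
/- Let H = (1, m, n, τ) be an h-vector with n < τ. Then H is the h-vector of an Artinian 3-level local k-algebra. -/
set_option synthInstance.maxHeartbeats 1000000
set_option maxHeartbeats 2000000

open Module

section LinAlg
set_option linter.unusedSectionVars false
variable {k : Type} [Field k]

theorem extend_fin {E : Type} [AddCommGroup E] [Module k E] [FiniteDimensional k E]
    (W V : Submodule k E) (hWV : W ≤ V) (t : ℕ) (h1 : finrank k W ≤ t) (h2 : t ≤ finrank k V) :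
    ∃ U : Submodule k E, W ≤ U ∧ U ≤ V ∧ finrank k U = t := by
  induction t, h1 using Nat.le_induction with
  | base => exact ⟨W, le_rfl, hWV, rfl⟩
  | succ t ht ih =>
    obtain ⟨U, hWU, hUV, hU⟩ := ih (by omega)
    have hne : U ≠ V := by rintro rfl; omega
    obtain ⟨v, hv, hvU⟩ := SetLike.exists_of_lt (lt_of_le_of_ne hUV hne)
    refine ⟨U ⊔ Submodule.span k {v}, hWU.trans le_sup_left,
      sup_le hUV (by simpa [Submodule.span_le] using hv), ?_⟩
    have := Submodule.finrank_sup_span_singleton (K := k) hvU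
    omega

variable {E2 E3 J : Type} [AddCommGroup E2] [Module k E2] [FiniteDimensional k E2]
  [AddCommGroup E3] [Module k E3] [FiniteDimensional k E3]

/-- The derivative space. -/
def Dsp (X : J → E2 →ₗ[k] E3) (V : Submodule k (Dual k E3)) : Submodule k (Dual k E2) :=
  ⨆ j, V.map (X j).dualMap

theorem Dsp_mono (X : J → E2 →ₗ[k] E3) {V W : Submodule k (Dual k E3)} (h : V ≤ W) :
    Dsp X V ≤ Dsp X W :=
  iSup_mono fun _ => Submodule.map_mono h

theorem step_one {ι : Type} (X : J → E2 →ₗ[k] E3) (e2 : ι → Dual k E2) (e3 : ι → Dual k E3)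
    (c : ι → J → k) (hc : ∀ p j f, e3 p (X j f) = c p j * e2 p f)
    (hsep : ∀ f : E2, f ≠ 0 → ∃ p, e2 p f ≠ 0)
    (hc0 : ∀ p, e2 p ≠ 0 → ∃ j, c p j ≠ 0)
    (V : Submodule k (Dual k E3)) (n : ℕ) (hV : finrank k (Dsp X V) ≤ n)
    (hn : n ≤ finrank k E2) :
    ∃ U, V ≤ U ∧ finrank k (Dsp X U) = n := by
  induction n, hV using Nat.le_induction with
  | base => exact ⟨V, le_rfl, rfl⟩
  | succ t ht ih =>
    obtain ⟨U, hVU, hU⟩ := ih (by omega)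
    have hex : ∃ p, e2 p ∉ Dsp X U := by
      by_contra! hcon
      have hco : (Dsp X U).dualCoannihilator = ⊥ := by
        rw [eq_bot_iff]
        intro f hf
        by_contra hf0
        obtain ⟨p, hp⟩ := hsep f hf0
        exact hp ((Submodule.mem_dualCoannihilator f).1 hf _ (hcon p))
      have := Subspace.finrank_add_finrank_dualCoannihilator_eq (Dsp X U)
      rw [hco, finrank_bot] at this
      omega
    obtain ⟨p, hp⟩ := hex
    have hcomp : ∀ j, (X j).dualMap (e3 p) = c p j • e2 p := by
      intro j; ext f; simp [hc]
    refine ⟨U ⊔ Submodule.span k {e3 p}, hVU.trans le_sup_left, ?_⟩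
    have key : Dsp X (U ⊔ Submodule.span k {e3 p}) = Dsp X U ⊔ Submodule.span k {e2 p} := by
      apply le_antisymm
      · refine iSup_le fun j => ?_
        rw [Submodule.map_sup]
        refine sup_le_sup (le_iSup (fun j => U.map (X j).dualMap) j) ?_
        rw [Submodule.map_span, Set.image_singleton, hcomp, Submodule.span_singleton_le_iff_mem]
        exact Submodule.smul_mem _ _ (Submodule.mem_span_singleton_self _)
      · refine sup_le (Dsp_mono X le_sup_left) ?_
        rw [Submodule.span_singleton_le_iff_mem]
        obtain ⟨j, hj⟩ := hc0 p (by rintro h0; rw [h0] at hp; exact hp (zero_mem _))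
        have : c p j • e2 p ∈ Dsp X (U ⊔ Submodule.span k {e3 p}) := by
          rw [← hcomp]
          refine Submodule.mem_iSup_of_mem j (Submodule.mem_map_of_mem ?_)
          exact Submodule.mem_sup_right (Submodule.mem_span_singleton_self _)
        exact (Submodule.smul_mem_iff _ hj).1 this
    rw [key, Submodule.finrank_sup_span_singleton hp, hU]

theorem step_two (X : J → E2 →ₗ[k] E3) (V : Submodule k (Dual k E3)) (t : ℕ)
    (h1 : finrank k (Dsp X V) ≤ t) (h2 : t ≤ finrank k V) :
    ∃ U, Dsp X U = Dsp X V ∧ finrank k U = t := by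
  set s : Set (Dual k E2) := ⋃ j, (V.map (X j).dualMap : Set (Dual k E2)) with hs
  have hspan : Submodule.span k s = Dsp X V := by
    rw [hs, Submodule.span_iUnion]; simp [Dsp]
  obtain ⟨f, hf, hfs, -⟩ := Submodule.exists_fun_fin_finrank_span_eq k s
  have : ∀ i, ∃ v ∈ V, ∃ j, (X j).dualMap v = f i := by
    intro i
    obtain ⟨j, hj⟩ := Set.mem_iUnion.1 (hf i)
    obtain ⟨v, hv, hvj⟩ := hj
    exact ⟨v, hv, j, hvj⟩
  choose v hv j hj using this
  have hW : Submodule.span k (Set.range v) ≤ V := by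
    rw [Submodule.span_le]; rintro _ ⟨i, rfl⟩; exact hv i
  have hWf : finrank k (Submodule.span k (Set.range v)) ≤ t := by
    refine (finrank_range_le_card v).trans ?_
    rw [Fintype.card_fin, hspan]; exact h1
  obtain ⟨U, hWU, hUV, hU⟩ := extend_fin _ V hW t hWf h2
  refine ⟨U, le_antisymm (Dsp_mono X hUV) ?_, hU⟩
  rw [← hspan, ← hfs, Submodule.span_le]
  rintro _ ⟨i, rfl⟩
  rw [← hj]
  exact Submodule.mem_iSup_of_mem (j i) (Submodule.mem_map_of_mem
    (hWU (Submodule.subset_span ⟨i, rfl⟩)))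

theorem finrank_quot_coann {E : Type} [AddCommGroup E] [Module k E] [FiniteDimensional k E]
    (W : Submodule k (Dual k E)) : finrank k (E ⧸ W.dualCoannihilator) = finrank k W := by
  have h1 := Subspace.finrank_add_finrank_dualCoannihilator_eq W
  have h2 := Submodule.finrank_quotient_add_finrank W.dualCoannihilator
  omega

theorem abstract_exists {ι : Type} (X : J → E2 →ₗ[k] E3) (e2 : ι → Dual k E2)
    (e3 : ι → Dual k E3)
    (c : ι → J → k) (hc : ∀ p j f, e3 p (X j f) = c p j * e2 p f)
    (hsep : ∀ f : E2, f ≠ 0 → ∃ p, e2 p f ≠ 0)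
    (hc0 : ∀ p, e2 p ≠ 0 → ∃ j, c p j ≠ 0)
    (K2 : Submodule k E2) (K3 : Submodule k E3) (hK : ∀ j, ∀ f ∈ K2, X j f ∈ K3)
    (n t : ℕ) (hn : finrank k (E2 ⧸ K2) = n) (ht : finrank k (E3 ⧸ K3) = t) (hnt : n ≤ t) :
    ∃ (C : Submodule k E2) (K : Submodule k E3), (∀ f, f ∈ C ↔ ∀ j, X j f ∈ K) ∧
      finrank k (E2 ⧸ C) = n ∧ finrank k (E3 ⧸ K) = t := by
  have a2 := Subspace.finrank_add_finrank_dualAnnihilator_eq K2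
  have b2 := Submodule.finrank_quotient_add_finrank K2
  have a3 := Subspace.finrank_add_finrank_dualAnnihilator_eq K3
  have b3 := Submodule.finrank_quotient_add_finrank K3
  have hD : Dsp X K3.dualAnnihilator ≤ K2.dualAnnihilator := by
    refine iSup_le fun j => ?_
    rintro _ ⟨φ, hφ, rfl⟩
    rw [Submodule.mem_dualAnnihilator]
    intro f hf
    exact (Submodule.mem_dualAnnihilator φ).1 hφ _ (hK j f hf)
  have hD' := Submodule.finrank_mono hD
  obtain ⟨U, hU1, hU2⟩ := step_one X e2 e3 c hc hsep hc0 K3.dualAnnihilator n (by omega) (by omega)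
  have hU3 := Submodule.finrank_mono hU1
  obtain ⟨V, hV1, hV2⟩ := step_two X U t (by omega) (by omega)
  refine ⟨(Dsp X V).dualCoannihilator, V.dualCoannihilator, ?_, ?_, ?_⟩
  · intro f
    simp only [Submodule.mem_dualCoannihilator]
    constructor
    · intro h j φ hφ
      exact h _ (Submodule.mem_iSup_of_mem j (Submodule.mem_map_of_mem hφ))
    · intro h
      have : Dsp X V ≤ LinearMap.ker (Dual.eval k E2 f) := by
        refine iSup_le fun j => ?_
        rintro _ ⟨φ, hφ, rfl⟩
        exact h j φ hφ
      intro φ hφ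
      exact this hφ
  · rw [finrank_quot_coann, hV1, hU2]
  · rw [finrank_quot_coann, hV2]

end LinAlg
section Red
open MvPolynomial
variable {k : Type} [Field k]

instance finE (m d : ℕ) : FiniteDimensional k (homogeneousSubmodule (Fin m) k d) :=
  Module.Finite.iff_fg.2 (homogeneousSubmodule_fg _ _ _)

/-- Multiplication by a variable. -/
noncomputable def Xmul (m : ℕ) (d : ℕ) (j : Fin m) :
    homogeneousSubmodule (Fin m) k d →ₗ[k] homogeneousSubmodule (Fin m) k (d + 1) :=
  LinearMap.codRestrict _ ((LinearMap.mulLeft k (X j)).comp (Submodule.subtype _)) (by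
    intro f
    have h := (isHomogeneous_X k j).mul ((mem_homogeneousSubmodule d f.1).1 f.2)
    rw [add_comm] at h
    exact h)

@[simp] theorem Xmul_coe (m d : ℕ) (j : Fin m) (f : homogeneousSubmodule (Fin m) k d) :
    ((Xmul m d j f : homogeneousSubmodule (Fin m) k (d+1)) : MvPolynomial (Fin m) k) = X j * f.1 :=
  rfl

theorem lift_hom {m m' : ℕ} (J : Ideal (MvPolynomial (Fin m') k))
    (l : Fin m → MvPolynomial (Fin m') k)
    (hl : ∀ i, ∃ g ∈ homogeneousSubmodule (Fin m) k 1, aeval l g - X i ∈ J) (d : ℕ) :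
    ∀ f ∈ homogeneousSubmodule (Fin m') k d, ∃ g ∈ homogeneousSubmodule (Fin m) k d,
      aeval l g - f ∈ J := by
  have hspan : ∀ d, ∀ f ∈ (homogeneousSubmodule (Fin m') k 1) ^ d,
      ∃ g ∈ homogeneousSubmodule (Fin m) k d, aeval l g - f ∈ J := by
    have h1 : ∀ f ∈ homogeneousSubmodule (Fin m') k 1,
        ∃ g ∈ homogeneousSubmodule (Fin m) k 1, aeval l g - f ∈ J := by
      intro f hf
      rw [homogeneousSubmodule_one_eq_span_X] at hf
      induction hf using Submodule.span_induction with
      | mem x hx => obtain ⟨i, rfl⟩ := hx; exact hl i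
      | zero => exact ⟨0, zero_mem _, by simp⟩
      | add x y _ _ hx hy =>
        obtain ⟨g, hg, hg'⟩ := hx
        obtain ⟨g2, hg2, hg2'⟩ := hy
        refine ⟨g + g2, add_mem hg hg2, ?_⟩
        have := add_mem hg' hg2'
        rw [map_add]; convert this using 1; ring
      | smul a x _ hx =>
        obtain ⟨g, hg, hg'⟩ := hx
        refine ⟨a • g, Submodule.smul_mem _ _ hg, ?_⟩
        rw [map_smul, ← smul_sub]
        exact Submodule.smul_of_tower_mem _ a hg'
    intro d
    induction d with
    | zero =>
      intro f hf
      rw [pow_zero, Submodule.mem_one] at hf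
      obtain ⟨c, rfl⟩ := hf
      exact ⟨C c, isHomogeneous_C _ _, by simp [algebraMap_eq]⟩
    | succ d ih =>
      intro f hf
      rw [pow_succ] at hf
      induction hf using Submodule.mul_induction_on' with
      | mem_mul_mem a ha b hb =>
        obtain ⟨g, hg, hg'⟩ := ih a ha
        obtain ⟨g2, hg2, hg2'⟩ := h1 b hb
        refine ⟨g * g2, IsHomogeneous.mul hg hg2, ?_⟩
        have := add_mem (J.mul_mem_right (aeval l g2) hg') (J.mul_mem_left a hg2')
        rw [map_mul]; convert this using 1; ring
      | add x _ y _ hx hy =>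
        obtain ⟨g, hg, hg'⟩ := hx
        obtain ⟨g2, hg2, hg2'⟩ := hy
        refine ⟨g + g2, add_mem hg hg2, ?_⟩
        have := add_mem hg' hg2'
        rw [map_add]; convert this using 1; ring
  intro f hf
  apply hspan
  rwa [homogeneousSubmodule_one_pow]

theorem reduce {m m' : ℕ} (J : Ideal (MvPolynomial (Fin m') k))
    (h1 : gradedDim k m' J 1 = m) :
    ∃ K : (d : ℕ) → Submodule k (homogeneousSubmodule (Fin m) k d),
      (∀ d j, ∀ f ∈ K d, Xmul m d j f ∈ K (d + 1)) ∧
      ∀ d, finrank k (homogeneousSubmodule (Fin m) k d ⧸ K d) = gradedDim k m' J d := by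
  set π := ((J : Submodule (MvPolynomial (Fin m') k) (MvPolynomial (Fin m') k)).restrictScalars
    k).mkQ with hπ
  have hker : ∀ f, π f = 0 ↔ f ∈ J := by
    intro f; rw [hπ, Submodule.mkQ_apply, Submodule.Quotient.mk_eq_zero]; rfl
  have hb : finrank k ((homogeneousSubmodule (Fin m') k 1).map π) = m := h1
  let b := Module.finBasisOfFinrankEq k _ hb
  have : ∀ i, ∃ l ∈ homogeneousSubmodule (Fin m') k 1, π l = b i := fun i => (b i).2
  choose l hl hlb using this
  have hl1 : ∀ i, ∃ g ∈ homogeneousSubmodule (Fin m) k 1, aeval l g - X i ∈ J := by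
    intro i
    have hx : π (X i) ∈ (homogeneousSubmodule (Fin m') k 1).map π :=
      Submodule.mem_map_of_mem (isHomogeneous_X k i)
    have hsum := b.sum_repr ⟨_, hx⟩
    have hsum' := congrArg Subtype.val hsum
    refine ⟨∑ j, (b.repr ⟨_, hx⟩ j) • X j, ?_, ?_⟩
    · exact Submodule.sum_mem _ fun j _ => Submodule.smul_mem _ _ (isHomogeneous_X k j)
    · rw [← hker, map_sub, sub_eq_zero]
      refine Eq.trans ?_ hsum'
      rw [AddSubmonoidClass.coe_finsetSum]
      simp only [map_sum, map_smul, aeval_X, hlb, Submodule.coe_smul]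
  have hlift := lift_hom J l hl1
  have hhom : ∀ d, ∀ g ∈ homogeneousSubmodule (Fin m) k d,
      aeval l g ∈ homogeneousSubmodule (Fin m') k d := by
    intro d g hg
    have := IsHomogeneous.aeval (n := 1) hg l hl
    rwa [one_mul] at this
  let ψ : (d : ℕ) → homogeneousSubmodule (Fin m) k d →ₗ[k] _ := fun d =>
    (π.comp (aeval l).toLinearMap).comp (Submodule.subtype _)
  have hψ : ∀ d f, ψ d f = π (aeval l f.1) := fun d f => rfl
  refine ⟨fun d => LinearMap.ker (ψ d), ?_, ?_⟩
  · intro d j f hf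
    rw [LinearMap.mem_ker, hψ, hker] at hf ⊢
    rw [Xmul_coe, map_mul]
    exact J.mul_mem_left _ hf
  · intro d
    rw [(ψ d).quotKerEquivRange.finrank_eq]
    have : LinearMap.range (ψ d) = (homogeneousSubmodule (Fin m') k d).map π := by
      apply le_antisymm
      · rintro _ ⟨g, rfl⟩
        exact ⟨_, hhom d g g.2, rfl⟩
      · rintro _ ⟨f, hf, rfl⟩
        obtain ⟨g, hg, hg'⟩ := hlift d f hf
        refine ⟨⟨g, hg⟩, ?_⟩
        rw [← hker, map_sub, sub_eq_zero] at hg'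
        rw [hψ]
        exact hg'
    rw [this]; rfl

theorem exists_CK [CharZero k] {m m' n t : ℕ} (J : Ideal (MvPolynomial (Fin m') k))
    (h1 : gradedDim k m' J 1 = m) (h2 : gradedDim k m' J 2 = n) (h3 : gradedDim k m' J 3 = t)
    (hnt : n ≤ t) :
    ∃ (C : Submodule k (homogeneousSubmodule (Fin m) k 2))
      (K : Submodule k (homogeneousSubmodule (Fin m) k 3)),
      (∀ f, f ∈ C ↔ ∀ j, Xmul m 2 j f ∈ K) ∧
      finrank k (_ ⧸ C) = n ∧ finrank k (_ ⧸ K) = t := by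
  obtain ⟨K, hK, hKd⟩ := reduce J h1
  let ev : (d : ℕ) → (p : Fin m → k) → Dual k (homogeneousSubmodule (Fin m) k d) := fun d p =>
    (aeval p : MvPolynomial (Fin m) k →ₐ[k] k).toLinearMap.comp (Submodule.subtype _)
  have hev : ∀ d p f, ev d p f = eval p f.1 := fun d p f => by
    simp [ev, aeval_eq_eval]
  refine abstract_exists (Xmul m 2) (ev 2) (ev 3) (fun p j => p j) ?_ ?_ ?_ (K 2) (K 3) (hK 2) n t
    ((hKd 2).trans h2) ((hKd 3).trans h3) hnt
  · intro p j f
    rw [hev, hev, Xmul_coe]; simp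
  · intro f hf
    by_contra! hcon
    apply hf
    ext1
    apply MvPolynomial.funext
    intro p
    rw [← hev 2 p f, hcon]; simp
  · intro p hp
    by_contra! hcon
    apply hp
    have hp0 : p = 0 := _root_.funext hcon
    ext f
    rw [hev, hp0]
    have : eval (0 : Fin m → k) f.1 = constantCoeff f.1 := by simp [constantCoeff_eq]
    rw [this, constantCoeff_eq]
    exact IsHomogeneous.coeff_eq_zero f.2 (by simp)

theorem dual_sys {V : Type} [AddCommGroup V] [Module k V] [FiniteDimensional k V]
    (N : Submodule k V) : ∃ (r : ℕ) (lam : Fin r → Dual k V) (b : Fin r → V),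
      (∀ a, b a ∈ N) ∧ (∀ a c, lam a (b c) = if c = a then 1 else 0) ∧
      ∀ f ∈ N, (∀ a, lam a f = 0) → f = 0 := by
  obtain ⟨π, hπ⟩ := LinearMap.exists_leftInverse_of_injective N.subtype (Submodule.ker_subtype N)
  have hπN : ∀ x : N, π x.1 = x := fun x => LinearMap.congr_fun hπ x
  let b := Module.finBasis k N
  refine ⟨_, fun a => (b.coord a).comp π, fun a => (b a).1, fun a => (b a).2, ?_, ?_⟩
  · intro a c
    simp [hπN, Finsupp.single_apply]
  · intro f hf h
    have : (⟨f, hf⟩ : N) = 0 := by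
      apply b.repr.injective
      ext c
      have := h c
      have h3 := hπN ⟨f, hf⟩
      simp only at h3
      simpa [h3] using this
    exact congrArg Subtype.val this

theorem exists_q {m : ℕ} (N : Submodule k (homogeneousSubmodule (Fin m) k 1)) :
    ∃ q : MvPolynomial (Fin m) k →ₗ[k] k, ∀ f ∈ N, (∀ g ∈ N, q (f.1 * g.1) = 0) → f = 0 := by
  obtain ⟨r, lam, b, hbN, hlb, hN⟩ := dual_sys N
  let xx : Fin m → homogeneousSubmodule (Fin m) k 1 := fun i => ⟨X i, isHomogeneous_X k i⟩
  let p : Fin r → Fin m → k := fun a i => lam a (xx i)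
  have hp : ∀ a (f : homogeneousSubmodule (Fin m) k 1), aeval (p a) f.1 = lam a f := by
    intro a f
    obtain ⟨f, hf⟩ := f
    have hf' : f ∈ Submodule.span k (Set.range X) := by
      rwa [← homogeneousSubmodule_one_eq_span_X]
    obtain ⟨c, rfl⟩ := (Submodule.mem_span_range_iff_exists_fun k).1 hf'
    have : (⟨∑ i, c i • X i, hf⟩ : homogeneousSubmodule (Fin m) k 1) = ∑ i, c i • xx i := by
      ext1; simp [xx]
    have hL : lam a (∑ i, c i • xx i) = ∑ i, c i • lam a (xx i) := by
      rw [map_sum]; simp only [map_smul]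
    rw [this, hL, ← this]
    simp only [map_sum, map_smul, aeval_X, p]
  refine ⟨∑ a, (aeval (p a) : MvPolynomial (Fin m) k →ₐ[k] k).toLinearMap, ?_⟩
  intro f hf h
  apply hN f hf
  intro c
  have := h (b c) (hbN c)
  simp only [LinearMap.sum_apply, AlgHom.toLinearMap_apply, map_mul, hp, hlb] at this
  simpa using this

end Red
section Ring
open MvPolynomial
variable {k : Type} [Field k] {m : ℕ}

theorem hc_mul (f g : MvPolynomial (Fin m) k) (d e : ℕ) (hg : g ∈ homogeneousSubmodule (Fin m) k e) :
    homogeneousComponent (d + e) (f * g) = homogeneousComponent d f * g := by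
  conv_lhs => rw [← sum_homogeneousComponent f, Finset.sum_mul, map_sum]
  have : ∀ i, homogeneousComponent (d + e) (homogeneousComponent i f * g) =
      if d = i then homogeneousComponent i f * g else 0 := by
    intro i
    rw [homogeneousComponent_of_mem (IsHomogeneous.mul (homogeneousComponent_isHomogeneous i f) hg)]
    simp
  simp only [this]
  rw [Finset.sum_ite_eq]
  split_ifs with h
  · rfl
  · rw [homogeneousComponent_eq_zero d f (by simpa using h), zero_mul]

theorem hc_mul_lt (f g : MvPolynomial (Fin m) k) (d e : ℕ) (hde : d < e)
    (hg : g ∈ homogeneousSubmodule (Fin m) k e) :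
    homogeneousComponent d (f * g) = 0 := by
  conv_lhs => rw [← sum_homogeneousComponent f, Finset.sum_mul, map_sum]
  refine Finset.sum_eq_zero fun i _ => ?_
  rw [homogeneousComponent_of_mem (IsHomogeneous.mul (homogeneousComponent_isHomogeneous i f) hg),
    if_neg (by omega)]

theorem mem_npow (j : ℕ) (f : MvPolynomial (Fin m) k) :
    f ∈ idealOfVars (Fin m) k ^ j ↔ ∀ d < j, homogeneousComponent d f = 0 := by
  rw [mem_pow_idealOfVars_iff']
  constructor
  · intro h d hd
    ext x
    rw [coeff_homogeneousComponent, coeff_zero]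
    split_ifs with hx
    · exact h x (by omega)
    · rfl
  · intro h x hx
    have := congrArg (coeff x) (h _ hx)
    rwa [coeff_homogeneousComponent, if_pos rfl, coeff_zero] at this

theorem hom_mem_npow (j : ℕ) (f : MvPolynomial (Fin m) k)
    (hf : f ∈ homogeneousSubmodule (Fin m) k j) : f ∈ idealOfVars (Fin m) k ^ j := by
  rw [mem_npow]
  intro d hd
  rw [homogeneousComponent_of_mem hf, if_neg (by omega)]

theorem sub_hc_mem (j : ℕ) (f : MvPolynomial (Fin m) k) (hf : f ∈ idealOfVars (Fin m) k ^ j) :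
    f - homogeneousComponent j f ∈ idealOfVars (Fin m) k ^ (j + 1) := by
  rw [mem_npow] at hf ⊢
  intro d hd
  rw [map_sub, homogeneousComponent_of_mem (homogeneousComponent_mem j f)]
  split_ifs with h
  · rw [h, sub_self]
  · rw [hf d (by omega), sub_zero]

/-- The map cutting out the ideal. -/
noncomputable def Tmap (q : MvPolynomial (Fin m) k →ₗ[k] k) (s : MvPolynomial (Fin m) k) :
    MvPolynomial (Fin m) k →ₗ[k] MvPolynomial (Fin m) k :=
  homogeneousComponent 3 + (q.comp (homogeneousComponent 2)).smulRight s

theorem Tmap_apply (q : MvPolynomial (Fin m) k →ₗ[k] k) (s f : MvPolynomial (Fin m) k) :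
    Tmap q s f = homogeneousComponent 3 f + q (homogeneousComponent 2 f) • s := rfl

/-- The ideal defining the level algebra. -/
noncomputable def Iid (q : MvPolynomial (Fin m) k →ₗ[k] k) (s : MvPolynomial (Fin m) k)
    (K : Submodule k (MvPolynomial (Fin m) k)) : Ideal (MvPolynomial (Fin m) k) where
  carrier := {f | ∀ g, Tmap q s (f * g) ∈ K}
  add_mem' := by
    intro a b ha hb g
    rw [add_mul, map_add]
    exact add_mem (ha g) (hb g)
  zero_mem' := by intro g; simp
  smul_mem' := by
    intro c f hf g
    have := hf (c * g)
    rwa [smul_eq_mul, mul_comm c f, mul_assoc]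

theorem mem_Iid (q : MvPolynomial (Fin m) k →ₗ[k] k) (s : MvPolynomial (Fin m) k)
    (K : Submodule k (MvPolynomial (Fin m) k)) (f : MvPolynomial (Fin m) k) :
    f ∈ Iid q s K ↔ ∀ g, Tmap q s (f * g) ∈ K := Iff.rfl

variable (q : MvPolynomial (Fin m) k →ₗ[k] k) (s : MvPolynomial (Fin m) k)
  (K : Submodule k (MvPolynomial (Fin m) k))

/-- The nondegeneracy hypothesis on the quadratic functional. -/
def QND : Prop := ∀ f ∈ homogeneousSubmodule (Fin m) k 1,
  (∀ g ∈ homogeneousSubmodule (Fin m) k 2, f * g ∈ K) →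
  (∀ f' ∈ homogeneousSubmodule (Fin m) k 1,
    (∀ g ∈ homogeneousSubmodule (Fin m) k 2, f' * g ∈ K) → q (f * f') = 0) → f = 0

theorem key1 (hs : s ∈ homogeneousSubmodule (Fin m) k 3) (hsK : s ∉ K) (hq : QND q K)
    (f : MvPolynomial (Fin m) k)
    (h : ∀ g ∈ idealOfVars (Fin m) k ^ 1, Tmap q s (f * g) ∈ K) :
    homogeneousComponent 0 f = 0 ∧ homogeneousComponent 1 f = 0 ∧
      ∀ g ∈ homogeneousSubmodule (Fin m) k 1, homogeneousComponent 2 f * g ∈ K := by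
  have hmem : ∀ e g, 1 ≤ e → g ∈ homogeneousSubmodule (Fin m) k e →
      Tmap q s (f * g) ∈ K := fun e g he hg =>
    h g (Ideal.pow_le_pow_right he (hom_mem_npow e g hg))
  have smulK : ∀ c : k, c • s ∈ K → c = 0 := by
    intro c hc
    by_contra hc0
    exact hsK ((Submodule.smul_mem_iff K hc0).1 hc)
  have h0 : homogeneousComponent 0 f = 0 := by
    have := hmem 3 s (by norm_num) hs
    rw [Tmap_apply, hc_mul f s 0 3 hs, hc_mul_lt f s 2 3 (by norm_num) hs, map_zero, zero_smul,
      add_zero, homogeneousComponent_zero, ← smul_eq_C_mul] at this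
    rw [homogeneousComponent_zero, smulK _ this, C_0]
  have h1 : ∀ g ∈ homogeneousSubmodule (Fin m) k 2, homogeneousComponent 1 f * g ∈ K := by
    intro g hg
    have := hmem 2 g (by norm_num) hg
    rwa [Tmap_apply, hc_mul f g 1 2 hg, hc_mul f g 0 2 hg, h0, zero_mul, map_zero, zero_smul,
      add_zero] at this
  have h2 : ∀ g ∈ homogeneousSubmodule (Fin m) k 1,
      homogeneousComponent 2 f * g + q (homogeneousComponent 1 f * g) • s ∈ K := by
    intro g hg
    have := hmem 1 g le_rfl hg
    rwa [Tmap_apply, hc_mul f g 2 1 hg, hc_mul f g 1 1 hg] at this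
  have h3 : homogeneousComponent 1 f = 0 := by
    refine hq _ (homogeneousComponent_mem 1 f) h1 ?_
    intro f' hf' hf'K
    have := h2 f' hf'
    rw [mul_comm _ f'] at this
    exact smulK _ ((Submodule.add_mem_iff_right K (hf'K _ (homogeneousComponent_mem 2 f))).1 this)
  refine ⟨h0, h3, fun g hg => ?_⟩
  have := h2 g hg
  rwa [h3, zero_mul, map_zero, zero_smul, add_zero] at this

theorem key2 (f : MvPolynomial (Fin m) k) (h0 : homogeneousComponent 0 f = 0)
    (h1 : homogeneousComponent 1 f = 0)
    (h2 : ∀ g ∈ homogeneousSubmodule (Fin m) k 1, homogeneousComponent 2 f * g ∈ K)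
    (hT : Tmap q s f ∈ K) : f ∈ Iid q s K := by
  rw [mem_Iid]
  intro g
  rw [← sum_homogeneousComponent g, Finset.mul_sum, map_sum]
  refine Submodule.sum_mem _ fun i _ => ?_
  have hg := homogeneousComponent_mem i g
  match i, hg with
  | 0, _ =>
    rw [homogeneousComponent_zero, mul_comm, ← smul_eq_C_mul, map_smul]
    exact K.smul_mem _ hT
  | 1, hg =>
    rw [Tmap_apply, hc_mul f _ 2 1 hg, hc_mul f _ 1 1 hg, h1, zero_mul, map_zero, zero_smul,
      add_zero]
    exact h2 _ hg
  | 2, hg =>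
    rw [Tmap_apply, hc_mul f _ 1 2 hg, hc_mul f _ 0 2 hg, h1, h0]
    simp
  | 3, hg =>
    rw [Tmap_apply, hc_mul f _ 0 3 hg, hc_mul_lt f _ 2 3 (by norm_num) hg, h0]
    simp
  | (i + 4), hg =>
    rw [Tmap_apply, hc_mul_lt f _ 3 _ (by omega) hg, hc_mul_lt f _ 2 _ (by omega) hg]
    simp

theorem n4_le : idealOfVars (Fin m) k ^ 4 ≤ Iid q s K := by
  intro f hf
  rw [mem_npow] at hf
  refine key2 q s K f (hf 0 (by omega)) (hf 1 (by omega)) ?_ ?_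
  · intro g _; rw [hf 2 (by omega)]; simp
  · rw [Tmap_apply, hf 2 (by omega), hf 3 (by omega)]; simp

theorem key1I (hs : s ∈ homogeneousSubmodule (Fin m) k 3) (hsK : s ∉ K) (hq : QND q K)
    (f : MvPolynomial (Fin m) k) (hf : f ∈ Iid q s K) :
    homogeneousComponent 0 f = 0 ∧ homogeneousComponent 1 f = 0 ∧
      (∀ g ∈ homogeneousSubmodule (Fin m) k 1, homogeneousComponent 2 f * g ∈ K) ∧
      Tmap q s f ∈ K := by
  obtain ⟨a, b, c⟩ := key1 q s K hs hsK hq f (fun g _ => hf g)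
  exact ⟨a, b, c, by simpa using hf 1⟩

theorem corr (hs : s ∈ homogeneousSubmodule (Fin m) k 3)
    (f : MvPolynomial (Fin m) k) (hf : f ∈ homogeneousSubmodule (Fin m) k 2)
    (hfC : ∀ g ∈ homogeneousSubmodule (Fin m) k 1, f * g ∈ K) :
    f - q f • s ∈ Iid q s K := by
  have hd : ∀ d, homogeneousComponent d (f - q f • s) =
      (if d = 2 then f else 0) - q f • (if d = 3 then s else 0) := by
    intro d
    rw [map_sub, map_smul, homogeneousComponent_of_mem hf, homogeneousComponent_of_mem hs]
  refine key2 q s K _ ?_ ?_ ?_ ?_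
  · rw [hd]; simp
  · rw [hd]; simp
  · intro g hg; rw [hd]; simpa using hfC g hg
  · rw [Tmap_apply, hd, hd]; simp

theorem mk_mem_pow (I : Ideal (MvPolynomial (Fin m) k)) (j : ℕ) (f : MvPolynomial (Fin m) k) :
    Ideal.Quotient.mk I f ∈ ((idealOfVars (Fin m) k).map (Ideal.Quotient.mk I)) ^ j ↔
      ∃ h ∈ idealOfVars (Fin m) k ^ j, f - h ∈ I := by
  rw [← Ideal.map_pow, Ideal.mem_map_iff_of_surjective _ Ideal.Quotient.mk_surjective]
  constructor
  · rintro ⟨h, hh, he⟩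
    exact ⟨h, hh, Ideal.Quotient.eq.1 he.symm⟩
  · rintro ⟨h, hh, he⟩
    exact ⟨h, hh, (Ideal.Quotient.eq.2 he).symm⟩

theorem HF_eq (I : Ideal (MvPolynomial (Fin m) k)) (j : ℕ)
    (Kj : Submodule k (homogeneousSubmodule (Fin m) k j))
    (hK : ∀ f, f ∈ Kj ↔ ∃ h ∈ idealOfVars (Fin m) k ^ (j + 1), f.1 - h ∈ I) :
    HF k (MvPolynomial (Fin m) k ⧸ I) ((idealOfVars (Fin m) k).map (Ideal.Quotient.mk I)) j =
      finrank k (homogeneousSubmodule (Fin m) k j ⧸ Kj) := by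
  unfold HF
  set mA := (idealOfVars (Fin m) k).map (Ideal.Quotient.mk I) with hmA
  set π := ((mA ^ (j + 1)).restrictScalars k).mkQ with hπ
  have hker : ∀ f, π f = 0 ↔ f ∈ mA ^ (j + 1) := by
    intro f; rw [hπ, Submodule.mkQ_apply, Submodule.Quotient.mk_eq_zero]; rfl
  let ψ : homogeneousSubmodule (Fin m) k j →ₗ[k] _ :=
    (π.comp (Ideal.Quotient.mkₐ k I).toLinearMap).comp (Submodule.subtype _)
  have hψ : ∀ f, ψ f = π (Ideal.Quotient.mk I f.1) := fun f => rfl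
  have hKker : Kj = LinearMap.ker ψ := by
    ext f
    rw [LinearMap.mem_ker, hψ, hker, mk_mem_pow, hK]
  have hrange : ((mA ^ j).restrictScalars k).map π = LinearMap.range ψ := by
    apply le_antisymm
    · rintro _ ⟨a, ha, rfl⟩
      obtain ⟨f, rfl⟩ := Ideal.Quotient.mk_surjective a
      obtain ⟨h, hh, hfh⟩ := (mk_mem_pow I j f).1 ha
      refine ⟨⟨homogeneousComponent j h, homogeneousComponent_mem j h⟩, ?_⟩
      rw [hψ, ← sub_eq_zero, ← map_sub, hker, ← map_sub, mk_mem_pow]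
      refine ⟨homogeneousComponent j h - h, ?_, ?_⟩
      · rw [← neg_sub]; exact neg_mem (sub_hc_mem j h hh)
      · rw [← neg_mem_iff]
        convert hfh using 1
        ring
    · rintro _ ⟨f, rfl⟩
      refine ⟨Ideal.Quotient.mk I f.1, ?_, rfl⟩
      exact (mk_mem_pow I j f.1).2 ⟨f.1, hom_mem_npow j _ f.2, by simp⟩
  rw [hrange, hKker]
  exact ψ.quotKerEquivRange.finrank_eq.symm

end Ring
section Build
open MvPolynomial
variable {k : Type} [Field k] {m : ℕ}

theorem finrank_E0 : finrank k (homogeneousSubmodule (Fin m) k 0) = 1 := by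
  rw [homogeneousSubmodule_zero, Submodule.one_eq_span]
  exact finrank_span_singleton one_ne_zero

theorem finrank_E1 : finrank k (homogeneousSubmodule (Fin m) k 1) = m := by
  rw [homogeneousSubmodule_one_eq_span_X, finrank_span_eq_card]
  · simp
  · exact linearIndependent_X (Fin m) k

theorem mem_n_iff (f : MvPolynomial (Fin m) k) :
    f ∈ idealOfVars (Fin m) k ↔ constantCoeff f = 0 := by
  rw [← pow_one (idealOfVars (Fin m) k), mem_npow]
  constructor
  · intro h
    have := h 0 (by norm_num)
    rw [homogeneousComponent_zero, C_eq_zero] at this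
    exact this
  · intro h d hd
    obtain rfl : d = 0 := by omega
    rw [homogeneousComponent_zero, C_eq_zero]
    exact h

theorem mk_sub_const (I : Ideal (MvPolynomial (Fin m) k)) (f : MvPolynomial (Fin m) k) :
    Ideal.Quotient.mk I f - algebraMap k _ (constantCoeff f) ∈
      (idealOfVars (Fin m) k).map (Ideal.Quotient.mk I) := by
  have h : f - C (constantCoeff f) ∈ idealOfVars (Fin m) k := by
    rw [mem_n_iff]; simp
  have := Ideal.mem_map_of_mem (Ideal.Quotient.mk I) h
  rwa [map_sub] at this

variable (I : Ideal (MvPolynomial (Fin m) k))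

theorem mk_isUnit (h4 : idealOfVars (Fin m) k ^ 4 ≤ I)
    (f : MvPolynomial (Fin m) k) (hf : constantCoeff f ≠ 0) :
    IsUnit (Ideal.Quotient.mk I f) := by
  have h1 := mk_sub_const I f
  set b := Ideal.Quotient.mk I f - algebraMap k _ (constantCoeff f) with hb
  have h2 : IsNilpotent b := by
    refine ⟨4, ?_⟩
    have := Ideal.pow_mem_pow h1 4
    rw [← Ideal.map_pow] at this
    have hle : (idealOfVars (Fin m) k ^ 4).map (Ideal.Quotient.mk I) ≤ ⊥ := by
      rw [Ideal.map_le_iff_le_comap, ← RingHom.ker_eq_comap_bot, Ideal.mk_ker]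
      exact h4
    exact hle this
  have h3 : IsUnit (algebraMap k (MvPolynomial (Fin m) k ⧸ I) (constantCoeff f)) :=
    (IsUnit.mk0 _ hf).map _
  have h5 : Ideal.Quotient.mk I f = algebraMap k _ (constantCoeff f) + b := by rw [hb]; ring
  rw [h5]
  exact h2.isUnit_add_left_of_commute h3 (Commute.all _ _)

theorem isLocal_quot (h4 : idealOfVars (Fin m) k ^ 4 ≤ I)
    (hI : I ≤ idealOfVars (Fin m) k) :
    ∃ _ : IsLocalRing (MvPolynomial (Fin m) k ⧸ I),
      IsLocalRing.maximalIdeal (MvPolynomial (Fin m) k ⧸ I) =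
        (idealOfVars (Fin m) k).map (Ideal.Quotient.mk I) := by
  let ε : (MvPolynomial (Fin m) k ⧸ I) →+* k :=
    Ideal.Quotient.lift I constantCoeff (fun f hf => (mem_n_iff f).1 (hI hf))
  have hε : ∀ f, ε (Ideal.Quotient.mk I f) = constantCoeff f := fun f => Ideal.Quotient.lift_mk _ _ _
  have hloc : IsLocalHom ε := by
    constructor
    intro a ha
    obtain ⟨f, rfl⟩ := Ideal.Quotient.mk_surjective a
    rw [hε] at ha
    exact mk_isUnit I h4 f ha.ne_zero
  have hL : IsLocalRing (MvPolynomial (Fin m) k ⧸ I) := RingHom.domain_isLocalRing ε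
  refine ⟨hL, ?_⟩
  ext a
  obtain ⟨f, rfl⟩ := Ideal.Quotient.mk_surjective a
  rw [IsLocalRing.mem_maximalIdeal, mem_nonunits_iff]
  constructor
  · intro h
    have h0 : constantCoeff f = 0 := by
      by_contra h0
      exact h (mk_isUnit I h4 f h0)
    exact Ideal.mem_map_of_mem _ ((mem_n_iff f).2 h0)
  · intro h hu
    have hu' := (hu.map ε).ne_zero
    rw [hε] at hu'
    apply hu'
    obtain ⟨g, hg, hgf⟩ := (Ideal.mem_map_iff_of_surjective _ Ideal.Quotient.mk_surjective).1 h
    have := hI (Ideal.Quotient.eq.1 hgf)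
    rw [mem_n_iff] at this hg
    rw [map_sub, hg, zero_sub, neg_eq_zero] at this
    exact this

theorem finite_quot (h4 : idealOfVars (Fin m) k ^ 4 ≤ I) :
    Module.Finite k (MvPolynomial (Fin m) k ⧸ I) := by
  let W : Submodule k (MvPolynomial (Fin m) k) :=
    ⨆ d : Fin 4, homogeneousSubmodule (Fin m) k d
  have : Module.Finite k W := Submodule.finite_iSup _
  let ψ : W →ₗ[k] (MvPolynomial (Fin m) k ⧸ I) :=
    (Ideal.Quotient.mkₐ k I).toLinearMap.comp W.subtype
  apply Module.Finite.of_surjective ψ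
  intro a
  obtain ⟨f, rfl⟩ := Ideal.Quotient.mk_surjective a
  refine ⟨⟨∑ d : Fin 4, homogeneousComponent d f, Submodule.sum_mem _ fun d _ =>
    Submodule.mem_iSup_of_mem d (homogeneousComponent_mem _ _)⟩, ?_⟩
  change Ideal.Quotient.mk I (∑ d : Fin 4, homogeneousComponent (d : ℕ) f) = _
  rw [Ideal.Quotient.eq]
  apply h4
  rw [mem_npow]
  intro d hd
  rw [map_sub, map_sum]
  simp only [homogeneousComponent_of_mem (homogeneousComponent_mem _ f)]
  rw [Finset.sum_eq_single (⟨d, hd⟩ : Fin 4)]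
  · simp
  · intro b _ hb
    rw [if_neg]
    rintro rfl
    exact hb rfl
  · simp

theorem build (q : MvPolynomial (Fin m) k →ₗ[k] k) (s : MvPolynomial (Fin m) k)
    (K : Submodule k (MvPolynomial (Fin m) k))
    (hs : s ∈ homogeneousSubmodule (Fin m) k 3) (hsK : s ∉ K) (hq : QND q K) (n t : ℕ)
    (Cc : Submodule k (homogeneousSubmodule (Fin m) k 2))
    (hC : ∀ f, f ∈ Cc ↔ ∀ g ∈ homogeneousSubmodule (Fin m) k 1, f.1 * g ∈ K)
    (hn : finrank k (homogeneousSubmodule (Fin m) k 2 ⧸ Cc) = n)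
    (ht : finrank k (homogeneousSubmodule (Fin m) k 3 ⧸
      K.comap (homogeneousSubmodule (Fin m) k 3).subtype) = t) (ht0 : 0 < t) :
    ∃ B : ArtinianLevelLocalAlgebra k 3 t,
      ∀ j, HF k B.carrier (IsLocalRing.maximalIdeal B.carrier) j = hVec 1 m n t j := by
  set I := Iid q s K with hIdef
  have h4 : idealOfVars (Fin m) k ^ 4 ≤ I := n4_le q s K
  have hkey := key1I q s K hs hsK hq
  have hI2 : I ≤ idealOfVars (Fin m) k ^ 2 := by
    intro f hf
    obtain ⟨a, b, -⟩ := hkey f hf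
    rw [mem_npow]
    intro d hd
    interval_cases d <;> assumption
  have hI1 : I ≤ idealOfVars (Fin m) k := by
    refine hI2.trans ?_
    exact Ideal.pow_le_self (by norm_num)
  obtain ⟨hL, hmax⟩ := isLocal_quot I h4 hI1
  set mA := (idealOfVars (Fin m) k).map (Ideal.Quotient.mk I) with hmA
  have hfin := finite_quot I h4
  have hm4 : mA ^ 4 = ⊥ := by
    rw [eq_bot_iff, hmA, ← Ideal.map_pow, Ideal.map_le_iff_le_comap, ← RingHom.ker_eq_comap_bot,
      Ideal.mk_ker]
    exact h4
  -- components vanish for low powers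
  have hlow : ∀ j, j < 2 → ∀ f : homogeneousSubmodule (Fin m) k j,
      (f ∈ (⊥ : Submodule k (homogeneousSubmodule (Fin m) k j)) ↔
        ∃ h ∈ idealOfVars (Fin m) k ^ (j + 1), f.1 - h ∈ I) := by
    intro j hj f
    rw [Submodule.mem_bot]
    constructor
    · rintro rfl
      exact ⟨0, zero_mem _, by simp⟩
    · rintro ⟨h, hh, hfh⟩
      have h1 := Ideal.pow_le_pow_right (show j + 1 ≤ 2 by omega) (hI2 hfh)
      have h2 : f.1 ∈ idealOfVars (Fin m) k ^ (j + 1) := by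
        have := add_mem h1 hh
        rwa [sub_add_cancel] at this
      rw [mem_npow] at h2
      have h3 := h2 j (by omega)
      rw [homogeneousComponent_of_mem f.2, if_pos rfl] at h3
      exact Subtype.ext h3
  have HF0 : HF k (MvPolynomial (Fin m) k ⧸ I) mA 0 = 1 := by
    rw [HF_eq I 0 ⊥ (hlow 0 (by norm_num)), (Submodule.quotEquivOfEqBot _ rfl).finrank_eq,
      finrank_E0]
  have HF1 : HF k (MvPolynomial (Fin m) k ⧸ I) mA 1 = m := by
    rw [HF_eq I 1 ⊥ (hlow 1 (by norm_num)), (Submodule.quotEquivOfEqBot _ rfl).finrank_eq,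
      finrank_E1]
  have HF2 : HF k (MvPolynomial (Fin m) k ⧸ I) mA 2 = n := by
    rw [HF_eq I 2 Cc, hn]
    intro f
    rw [hC]
    constructor
    · intro h
      exact ⟨q f.1 • s, Submodule.smul_of_tower_mem _ _ (hom_mem_npow 3 s hs),
        corr q s K hs f.1 f.2 h⟩
    · rintro ⟨h, hh, hfh⟩
      obtain ⟨-, -, h2, -⟩ := hkey _ hfh
      rw [map_sub, (mem_npow 3 h).1 hh 2 (by norm_num), homogeneousComponent_of_mem f.2, if_pos rfl,
        sub_zero] at h2
      exact h2
  have HF3 : HF k (MvPolynomial (Fin m) k ⧸ I) mA 3 = t := by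
    rw [HF_eq I 3 (K.comap (homogeneousSubmodule (Fin m) k 3).subtype), ht]
    intro f
    rw [Submodule.mem_comap, Submodule.subtype_apply]
    constructor
    · intro h
      refine ⟨0, zero_mem _, ?_⟩
      rw [sub_zero]
      have hd := fun d => homogeneousComponent_of_mem (m := d) f.2
      refine key2 q s K _ ?_ ?_ ?_ ?_
      · rw [hd]; simp
      · rw [hd]; simp
      · intro g hg; rw [hd]; simp
      · rw [Tmap_apply, hd, hd]; simpa using h
    · rintro ⟨h, hh, hfh⟩
      obtain ⟨-, -, -, h2⟩ := hkey _ hfh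
      rw [Tmap_apply, map_sub, map_sub, (mem_npow 4 h).1 hh 2 (by norm_num),
        (mem_npow 4 h).1 hh 3 (by norm_num), homogeneousComponent_of_mem f.2,
        homogeneousComponent_of_mem f.2] at h2
      simpa using h2
  have HF4 : ∀ j, HF k (MvPolynomial (Fin m) k ⧸ I) mA (j + 4) = 0 := by
    intro j
    have : mA ^ (j + 4) = ⊥ := by
      have h := Ideal.pow_le_pow_right (I := mA) (show 4 ≤ j + 4 by omega)
      rw [hm4] at h
      exact eq_bot_iff.2 h
    unfold HF
    rw [this]
    have h0 : ((⊥ : Ideal (MvPolynomial (Fin m) k ⧸ I)).restrictScalars k) = ⊥ := rfl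
    rw [h0, Submodule.map_bot, finrank_bot]
  have hf3 : finrank k ((mA ^ 3).restrictScalars k) = t := by
    rw [← HF3]
    unfold HF
    have hinj : Function.Injective ((mA ^ (3 + 1)).restrictScalars k).mkQ := by
      rw [← LinearMap.ker_eq_bot, Submodule.ker_mkQ]
      change (mA ^ 4).restrictScalars k = ⊥
      rw [hm4]; rfl
    exact (Submodule.equivMapOfInjective _ hinj _).finrank_eq
  have hcolon : (⊥ : Ideal (MvPolynomial (Fin m) k ⧸ I)).colon mA = mA ^ 3 := by
    apply le_antisymm
    · intro a ha
      obtain ⟨f, rfl⟩ := Ideal.Quotient.mk_surjective a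
      rw [Submodule.mem_colon] at ha
      have hfg : ∀ g ∈ idealOfVars (Fin m) k ^ 1, Tmap q s (f * g) ∈ K := by
        intro g hg
        rw [pow_one] at hg
        have := ha _ (Ideal.mem_map_of_mem (Ideal.Quotient.mk I) hg)
        rw [smul_eq_mul, ← map_mul, Submodule.mem_bot, Ideal.Quotient.eq_zero_iff_mem] at this
        simpa using this 1
      obtain ⟨a0, a1, a2⟩ := key1 q s K hs hsK hq f hfg
      have hc := corr q s K hs _ (homogeneousComponent_mem 2 f) a2
      refine (mk_mem_pow I 3 f).2
        ⟨f - (homogeneousComponent 2 f - q (homogeneousComponent 2 f) • s), ?_, ?_⟩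
      · have hf2 : f ∈ idealOfVars (Fin m) k ^ 2 := by
          rw [mem_npow]
          intro d hd
          interval_cases d <;> assumption
        have e : f - (homogeneousComponent 2 f - q (homogeneousComponent 2 f) • s) =
          (f - homogeneousComponent 2 f) + q (homogeneousComponent 2 f) • s := by ring
        rw [e]
        exact add_mem (sub_hc_mem 2 f hf2)
          (Submodule.smul_of_tower_mem _ _ (hom_mem_npow 3 s hs))
      · rw [sub_sub_cancel]; exact hc
    · intro a ha
      rw [Submodule.mem_colon]
      intro b hb
      rw [smul_eq_mul, ← hm4, pow_succ]
      exact Ideal.mul_mem_mul ha hb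
  have hlev : IsLevelOfType k (MvPolynomial (Fin m) k ⧸ I) mA 3 t := by
    refine ⟨?_, hm4, hcolon, ?_⟩
    · intro h0
      rw [h0] at hf3
      have h1 : ((⊥ : Ideal (MvPolynomial (Fin m) k ⧸ I)).restrictScalars k) = ⊥ := rfl
      rw [h1, finrank_bot] at hf3
      omega
    · rw [hcolon, hf3]
  refine ⟨@ArtinianLevelLocalAlgebra.mk k _ 3 t (MvPolynomial (Fin m) k ⧸ I) _ _ hL
    (IsArtinianRing.of_finite k _) ?_ (hmax ▸ hlev), ?_⟩
  · intro x
    obtain ⟨a, rfl⟩ := Ideal.Quotient.mk_surjective x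
    obtain ⟨f, rfl⟩ := Ideal.Quotient.mk_surjective a
    refine ⟨constantCoeff f, ?_⟩
    symm
    have h1 := mk_sub_const I f
    rw [← hmA, ← hmax, ← Ideal.Quotient.eq] at h1
    exact h1
  · intro j
    change HF k (MvPolynomial (Fin m) k ⧸ I) (IsLocalRing.maximalIdeal _) j = _
    rw [hmax]
    match j with
    | 0 => exact HF0
    | 1 => exact HF1
    | 2 => exact HF2
    | 3 => exact HF3
    | j + 4 => rw [HF4]; simp [hVec]

end Build

/-- **Proposition.** Let `H = (1, m, n, τ)` be an h-vector with `n < τ`. Then `H` is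
the h-vector of an Artinian `3`-level local `k`-algebra. -/
theorem h_vector_three_level_nonunimodal
    (k : Type) [Field k] [IsAlgClosed k] [CharZero k] (m n τ : ℕ)
    (hO : IsOSequence k (hVec 1 m n τ))
    (h : n < τ) :
    ∃ B : ArtinianLevelLocalAlgebra k 3 τ,
      ∀ j, HF k B.carrier (IsLocalRing.maximalIdeal B.carrier) j = hVec 1 m n τ j := by
  obtain ⟨m', J, -, hJ⟩ := hO
  have e1 : gradedDim k m' J 1 = m := hJ 1
  have e2 : gradedDim k m' J 2 = n := hJ 2
  have e3 : gradedDim k m' J 3 = τ := hJ 3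
  obtain ⟨C, K, hCK, hC, hK⟩ := exists_CK J e1 e2 e3 h.le
  let K' : Submodule k (MvPolynomial (Fin m) k) :=
    K.map (MvPolynomial.homogeneousSubmodule (Fin m) k 3).subtype
  have hKK' : K'.comap (MvPolynomial.homogeneousSubmodule (Fin m) k 3).subtype = K :=
    Submodule.comap_map_eq_of_injective (Submodule.subtype_injective _) K
  have hmem : ∀ f : MvPolynomial.homogeneousSubmodule (Fin m) k 3, f.1 ∈ K' ↔ f ∈ K := by
    intro f
    rw [← hKK']; rfl
  have hsex : ∃ s : MvPolynomial.homogeneousSubmodule (Fin m) k 3, s ∉ K := by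
    by_contra! hcon
    have hKtop : K = ⊤ := eq_top_iff.2 fun x _ => hcon x
    rw [hKtop] at hK
    have h0 : finrank k (MvPolynomial.homogeneousSubmodule (Fin m) k 3 ⧸
      (⊤ : Submodule k (MvPolynomial.homogeneousSubmodule (Fin m) k 3))) = 0 :=
      finrank_zero_of_subsingleton
    omega
  obtain ⟨s, hs⟩ := hsex
  let N : Submodule k (MvPolynomial.homogeneousSubmodule (Fin m) k 1) :=
    { carrier := {f | ∀ g ∈ MvPolynomial.homogeneousSubmodule (Fin m) k 2, f.1 * g ∈ K'}
      add_mem' := by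
        intro a b ha hb g hg
        have := add_mem (ha g hg) (hb g hg)
        rwa [← add_mul] at this
      zero_mem' := by intro g _; simp
      smul_mem' := by
        intro c f hf g hg
        have := K'.smul_mem c (hf g hg)
        rwa [← smul_mul_assoc] at this }
  obtain ⟨q, hq⟩ := exists_q N
  refine build q s.1 K' s.2 (by rwa [hmem]) ?_ n τ C ?_ hC (by rw [hKK']; exact hK) (by omega)
  · intro f hf hfN hfq
    have := hq ⟨f, hf⟩ hfN (fun g hg => hfq g.1 g.2 hg)
    exact congrArg Subtype.val this
  · intro f
    rw [hCK]
    constructor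
    · intro hj g hg
      rw [MvPolynomial.homogeneousSubmodule_one_eq_span_X] at hg
      induction hg using Submodule.span_induction with
      | mem x hx =>
        obtain ⟨j, rfl⟩ := hx
        have := (hmem _).2 (hj j)
        rwa [Xmul_coe, mul_comm] at this
      | zero => simp
      | add x y _ _ hx hy => rw [mul_add]; exact add_mem hx hy
      | smul a x _ hx => rw [mul_smul_comm]; exact K'.smul_mem a hx
    · intro hg j
      rw [← hmem, Xmul_coe, mul_comm]
      exact hg _ (MvPolynomial.isHomogeneous_X k j)
end
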